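/- There exist infinitely many pairwise non-congruent finite 4-regular straight-line unit-distance graphs in the Euclidean plane, each built from non-overlapping vertex-to-vertex unit triangles (the interiors of distinct unit triangles are disjoint), in which every edge is contained in a unit triangle and there are no additional triangles; equivalently, for every natural number N there is such a graph with more than N unit triangles. -/

import Mathlib

/-!
Straight-line unit-distance graphs in the Euclidean plane, modelled as ℂ.
-/

noncomputable section
open scoped Classical

/-- A finite straight-line unit-distance graph in the plane: a finite vertex
set `V ⊆ ℂ` and a finite set `E` of 2-element subsets of `V` (edges), each of
whose two endpoints are at distance one. -/
structure UnitDistGraph where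
  V : Finset ℂ
  E : Finset (Finset ℂ)
  edge_sub : ∀ e ∈ E, e ⊆ V
  edge_pair : ∀ e ∈ E, ∃ x y : ℂ, x ≠ y ∧ e = {x, y} ∧ dist x y = 1

namespace UnitDistGraph

/-- The closed segment drawn for an edge (the convex hull of its two endpoints). -/
def edgeSeg (e : Finset ℂ) : Set ℂ := convexHull ℝ (e : Set ℂ)

/-- The degree of a vertex: the number of edges containing it. -/
def degree (G : UnitDistGraph) (v : ℂ) : ℕ := {e | e ∈ G.E ∧ v ∈ e}.ncard

/-- The graph is drawn planarly: two distinct closed edge segments intersect in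
at most a common endpoint, and no vertex lies in the relative interior of an
edge (i.e. a vertex on a closed edge segment is an endpoint of that edge). -/
def Planar (G : UnitDistGraph) : Prop :=
  (∀ e ∈ G.E, ∀ f ∈ G.E, e ≠ f →
    edgeSeg e ∩ edgeSeg f ⊆ (e : Set ℂ) ∩ (f : Set ℂ)) ∧
  (∀ v ∈ G.V, ∀ e ∈ G.E, v ∈ edgeSeg e → v ∈ e)

/-- The graph is 4-regular: every vertex belongs to exactly 4 edges. -/
def Regular4 (G : UnitDistGraph) : Prop := ∀ v ∈ G.V, G.degree v = 4

/-- A unit triangle: a 3-element subset of `V` all of whose pairs are edges. -/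
def IsUnitTriangle (G : UnitDistGraph) (t : Finset ℂ) : Prop :=
  t ⊆ G.V ∧ t.card = 3 ∧ ∀ x ∈ t, ∀ y ∈ t, x ≠ y → ({x, y} : Finset ℂ) ∈ G.E

/-- The number of unit triangles of the graph. -/
def triangleCount (G : UnitDistGraph) : ℕ := {t : Finset ℂ | G.IsUnitTriangle t}.ncard

/-- The graph consists only of unit triangles: every edge lies in a unit triangle. -/
def OnlyUnitTriangles (G : UnitDistGraph) : Prop :=
  ∀ e ∈ G.E, ∃ t : Finset ℂ, G.IsUnitTriangle t ∧ e ⊆ t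

/-- The closed segment from `x` to `y` is a union of closed edge segments of `E`. -/
def SideCovered (G : UnitDistGraph) (x y : ℂ) : Prop :=
  ∃ S : Finset (Finset ℂ), S ⊆ G.E ∧ segment ℝ x y = ⋃ e ∈ S, edgeSeg e

/-- No additional triangles: any equilateral triangle on vertices of `V` each of
whose sides is a union of closed edge segments has side length 1. -/
def NoAdditionalTriangles (G : UnitDistGraph) : Prop :=
  ∀ x ∈ G.V, ∀ y ∈ G.V, ∀ z ∈ G.V, x ≠ y → y ≠ z → x ≠ z →
    dist x y = dist y z → dist y z = dist z x →
    G.SideCovered x y → G.SideCovered y z → G.SideCovered z x →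
    dist x y = 1

end UnitDistGraph

open UnitDistGraph

namespace UnitDistGraph

/-- Rotation of the plane about the center `c` by the angle `θ`. -/
def rot (c : ℂ) (θ : ℝ) (z : ℂ) : ℂ := c + Complex.exp (θ * Complex.I) * (z - c)

/-- The graph is invariant under the rotation about `c` by `θ`: this rotation
maps the vertex set onto itself and the edge set onto itself. -/
def RotInvariant (G : UnitDistGraph) (c : ℂ) (θ : ℝ) : Prop :=
  (rot c θ) '' (G.V : Set ℂ) = (G.V : Set ℂ) ∧
  (Finset.image (rot c θ)) '' (G.E : Set (Finset ℂ)) = (G.E : Set (Finset ℂ))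

/-- The unit triangles of the graph are non-overlapping: the interiors of the
closed triangular regions of two distinct unit triangles are disjoint. -/
def NonOverlapping (G : UnitDistGraph) : Prop :=
  ∀ t₁ t₂ : Finset ℂ, G.IsUnitTriangle t₁ → G.IsUnitTriangle t₂ → t₁ ≠ t₂ →
    interior (convexHull ℝ (t₁ : Set ℂ)) ∩ interior (convexHull ℝ (t₂ : Set ℂ)) = ∅

/-- The line through the point `c` with direction `d`. -/
def line (c d : ℂ) : Set ℂ := {z : ℂ | ∃ t : ℝ, z = c + (t : ℂ) * d}

/-- Two unit-distance graphs are congruent if some isometry of the plane maps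
the vertex set and edge set of one onto those of the other. -/
def Congruent (G₁ G₂ : UnitDistGraph) : Prop :=
  ∃ φ : ℂ ≃ᵢ ℂ, G₁.V.image φ = G₂.V ∧ G₁.E.image (Finset.image φ) = G₂.E

end UnitDistGraph

/-!
Take a strip of 80 unit triangles inside a sector of angle `π / 17000`, glued at corners so that
each corner lies in two triangles, except that corners on the two sides of the sector lie in one.
Reflecting the strip repeatedly in the sides of the sector closes it to a ring with dihedral
symmetry; a corner on a side meets its mirror image, so every vertex of the ring lies in exactly two
triangles and has degree four.

Such a strip is determined by 22 unit vectors, one for each rigid cluster of triangles, since all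
edges of a cluster differ by sixth roots of unity. That its six loops close and that
six of its corners line up along each side of the sector are `2 * 6 + 5 + 5 = 22` real equations for
the 22 directions. A numerical solution is turned into an exact one by the Newton–Kantorovich
theorem, and every inequality needed for the geometry holds at the numerical solution with a margin
exceeding the error.

Disjoint translates of the ring yield graphs with arbitrarily many triangles, and the number of
triangles is a congruence invariant.
-/

namespace UnitDistGraph

lemma edgeSeg_pair (x y : ℂ) : edgeSeg {x, y} = segment ℝ x y := by
  rw [edgeSeg, Finset.coe_pair, convexHull_pair]

lemma isClosed_edgeSeg (e : Finset ℂ) : IsClosed (edgeSeg e) :=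
  (e.finite_toSet.isCompact_convexHull ℝ).isClosed

lemma pair_left_injective (v : ℂ) : Function.Injective fun z : ℂ ↦ ({v, z} : Finset ℂ) := by
  intro z w h
  have h' : ({v, z} : Set ℂ) = {v, w} := by simpa using congrArg (fun s : Finset ℂ ↦ (s : Set ℂ)) h
  rcases Set.pair_eq_pair_iff.1 h' with ⟨-, h⟩ | ⟨hv, hz⟩
  exacts [h, hz.trans hv]

lemma degree_eq_ncard_neighbors (G : UnitDistGraph) (v : ℂ) :
    G.degree v = {z | ({v, z} : Finset ℂ) ∈ G.E}.ncard := by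
  rw [degree, ← Set.ncard_image_of_injective _ (pair_left_injective v)]
  congr 1
  ext e
  constructor
  · rintro ⟨he, hv⟩
    obtain ⟨x, y, -, rfl, -⟩ := G.edge_pair e he
    rcases Finset.mem_insert.1 hv with rfl | hv
    · exact ⟨y, he, rfl⟩
    · obtain rfl := Finset.mem_singleton.1 hv
      exact ⟨x, by rwa [Set.mem_ofPred, Finset.pair_comm], Finset.pair_comm _ _⟩
  · rintro ⟨z, hz, rfl⟩
    exact ⟨hz, Finset.mem_insert_self _ _⟩

lemma IsUnitTriangle.image {G H : UnitDistGraph} {φ : ℂ ≃ᵢ ℂ} (hV : G.V.image φ = H.V)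
    (hE : G.E.image (Finset.image φ) = H.E) {t : Finset ℂ} (ht : G.IsUnitTriangle t) :
    H.IsUnitTriangle (t.image φ) := by
  obtain ⟨hsub, hcard, hedge⟩ := ht
  refine ⟨hV ▸ Finset.image_subset_image hsub, ?_, ?_⟩
  · rw [Finset.card_image_of_injective _ φ.injective, hcard]
  · simp only [Finset.forall_mem_image]
    intro x hx y hy hxy
    have := Finset.mem_image_of_mem (Finset.image φ) (hedge x hx y hy (ne_of_apply_ne φ hxy))
    rwa [hE, Finset.image_insert, Finset.image_singleton] at this

lemma finite_setOf_isUnitTriangle (G : UnitDistGraph) : {t | G.IsUnitTriangle t}.Finite :=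
  G.V.powerset.finite_toSet.subset fun _ ht ↦ Finset.mem_coe.2 (Finset.mem_powerset.2 ht.1)

lemma Congruent.symm {G H : UnitDistGraph} (h : Congruent G H) : Congruent H G := by
  obtain ⟨φ, hV, hE⟩ := h
  have hφ : (φ.symm : ℂ → ℂ) ∘ φ = id := φ.symm_comp_self
  refine ⟨φ.symm, ?_, ?_⟩
  · rw [← hV, Finset.image_image, hφ, Finset.image_id]
  · have hφ' : Finset.image φ.symm ∘ Finset.image φ = id := by
      funext e
      rw [Function.comp_apply, Finset.image_image, hφ, Finset.image_id, id]
    rw [← hE, Finset.image_image, hφ', Finset.image_id]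

lemma Congruent.triangleCount_le {G H : UnitDistGraph} (h : Congruent G H) :
    G.triangleCount ≤ H.triangleCount := by
  obtain ⟨φ, hV, hE⟩ := h
  exact Set.ncard_le_ncard_of_injOn (Finset.image φ) (fun _ ht ↦ IsUnitTriangle.image hV hE ht)
    (Finset.image_injective φ.injective).injOn H.finite_setOf_isUnitTriangle

lemma Congruent.triangleCount_eq {G H : UnitDistGraph} (h : Congruent G H) :
    G.triangleCount = H.triangleCount :=
  h.triangleCount_le.antisymm h.symm.triangleCount_le

end UnitDistGraph

lemma exists_closed_mem_left_inter_openSegment {E : Type*} [NormedAddCommGroup E]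
    [NormedSpace ℝ E] {ι : Type*} {S : Finset ι} {F : ι → Set E}
    (hF : ∀ i ∈ S, IsClosed (F i)) {x y : E} (hxy : openSegment ℝ x y ⊆ ⋃ i ∈ S, F i) :
    ∃ i ∈ S, x ∈ F i ∧ (F i ∩ openSegment ℝ x y).Nonempty := by
  have hx : x ∈ closure (⋃ i ∈ S, F i ∩ openSegment ℝ x y) := by
    rw [← Set.iUnion₂_inter, Set.inter_eq_right.2 hxy, closure_openSegment]
    exact left_mem_segment ℝ x y
  rw [S.closure_biUnion] at hx
  obtain ⟨i, hi, hx⟩ := Set.mem_iUnion₂.1 hx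
  exact ⟨i, hi, closure_minimal Set.inter_subset_left (hF i hi) hx, closure_nonempty_iff.1 ⟨x, hx⟩⟩

lemma eq_or_eq_add_sub_of_dist_eq_one {x y z w : ℂ} (hxy : dist x y = 1) (hxz : dist x z = 1)
    (hyz : dist y z = 1) (hxw : dist x w = 1) (hyw : dist y w = 1) : w = z ∨ w = x + y - z := by
  have hz : z ≠ x + y - z := by
    intro h
    have : ‖x - y‖ = ‖(2 : ℂ) * (x - z)‖ := congrArg _ (by linear_combination h)
    rw [norm_mul, ← dist_eq_norm, ← dist_eq_norm, hxy, hxz] at this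
    norm_num at this
  have hzx : dist z x = 1 := by rwa [dist_comm]
  have hzy : dist z y = 1 := by rwa [dist_comm]
  refine EuclideanGeometry.eq_of_dist_eq_of_dist_eq_of_finrank_eq_two Complex.finrank_real_complex
    (dist_ne_zero.1 (hxy ▸ one_ne_zero)) hz hzx ?_ (dist_comm w x ▸ hxw) hzy ?_
    (dist_comm w y ▸ hyw)
  · rw [dist_eq_norm, show x + y - z - x = y - z by ring, ← dist_eq_norm, hyz]
  · rw [dist_eq_norm, show x + y - z - y = x - z by ring, ← dist_eq_norm, hxz]

/-- A family of unit triangles, given by their labelled corners, such that two distinct triangles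
meet only in common corners and never have collinear consecutive sides at a common corner. -/
structure TrianglePatch (ι : Type*) where
  corner : ι → Fin 3 → ℂ
  dist_corner : ∀ t ⦃a b⦄, a ≠ b → dist (corner t a) (corner t b) = 1
  exists_corner_of_mem_hull : ∀ ⦃t t'⦄, t ≠ t' → ∀ ⦃z⦄, z ∈ convexHull ℝ (Set.range (corner t)) →
    z ∈ convexHull ℝ (Set.range (corner t')) → ∃ a b, corner t a = z ∧ corner t' b = z
  not_straight : ∀ ⦃t t'⦄, t ≠ t' → ∀ ⦃a b a' b'⦄, corner t a = corner t' b → a' ≠ a → b' ≠ b →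
    corner t a' + corner t' b' ≠ 2 * corner t a

namespace TrianglePatch

variable {ι : Type*} (P : TrianglePatch ι)

/-- The closed region covered by a triangle of the patch. -/
abbrev hull (t : ι) : Set ℂ := convexHull ℝ (Set.range (P.corner t))

/-- The number of triangles of the patch having `z` as a corner. -/
def valence (z : ℂ) : ℕ := {t | z ∈ Set.range (P.corner t)}.ncard

lemma corner_injective (t : ι) : Function.Injective (P.corner t) := by
  intro a b h
  by_contra hab
  exact zero_ne_one ((dist_eq_zero.2 h).symm.trans (P.dist_corner t hab))

lemma corner_mem_hull (t : ι) (a : Fin 3) : P.corner t a ∈ P.hull t :=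
  subset_convexHull ℝ _ (Set.mem_range_self a)

lemma segment_subset_hull (t : ι) (a b : Fin 3) :
    segment ℝ (P.corner t a) (P.corner t b) ⊆ P.hull t :=
  (convex_convexHull ℝ _).segment_subset (P.corner_mem_hull t a) (P.corner_mem_hull t b)

lemma eq_or_eq_of_corner_mem_segment {t t' : ι} {a b c : Fin 3} (hab : a ≠ b)
    (h : P.corner t' c ∈ segment ℝ (P.corner t a) (P.corner t b)) :
    P.corner t' c = P.corner t a ∨ P.corner t' c = P.corner t b := by
  obtain ⟨x, hx⟩ : ∃ x, P.corner t x = P.corner t' c := by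
    rcases eq_or_ne t t' with rfl | hne
    · exact ⟨c, rfl⟩
    · obtain ⟨x, -, hx, -⟩ := P.exists_corner_of_mem_hull hne (P.segment_subset_hull t a b h)
        (P.corner_mem_hull t' c)
      exact ⟨x, hx⟩
  rw [← hx] at h ⊢
  by_contra! hne
  have hsum := dist_add_dist_of_mem_segment h
  rw [P.dist_corner t fun h ↦ hne.1 (congrArg _ h.symm),
    P.dist_corner t fun h ↦ hne.2 (congrArg _ h), P.dist_corner t hab] at hsum
  norm_num at hsum

lemma eq_of_common_edge {t t' : ι} {a b c d : Fin 3} (hab : a ≠ b)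
    (hac : P.corner t a = P.corner t' c) (hbd : P.corner t b = P.corner t' d) : t = t' := by
  by_contra hne
  have hmid : midpoint ℝ (P.corner t a) (P.corner t b) ∈ segment ℝ (P.corner t a) (P.corner t b) :=
    midpoint_mem_segment _ _
  obtain ⟨x, -, hx, -⟩ := P.exists_corner_of_mem_hull hne (P.segment_subset_hull t a b hmid)
    (P.segment_subset_hull t' c d (hac ▸ hbd ▸ hmid))
  have hne' := (P.corner_injective t).ne hab
  rw [← hx] at hmid
  rcases P.eq_or_eq_of_corner_mem_segment hab hmid with h | h <;> rw [hx] at h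
  · exact hne' ((midpoint_eq_left_iff ℝ).1 h)
  · exact hne' ((midpoint_eq_right_iff ℝ).1 h)

lemma add_corner_ne {t t' : ι} {a b a' b' : Fin 3} (h : P.corner t a = P.corner t' b)
    (ha : a' ≠ a) (hb : b' ≠ b) : P.corner t a' + P.corner t' b' ≠ 2 * P.corner t a := by
  rcases eq_or_ne t t' with rfl | hne
  · obtain rfl := P.corner_injective t h
    intro hsum
    have hnorm : ‖P.corner t a' - P.corner t b'‖ = ‖2 * (P.corner t a' - P.corner t a)‖ :=
      congrArg _ (by linear_combination -hsum)
    rw [norm_mul, ← dist_eq_norm, ← dist_eq_norm, P.dist_corner t ha] at hnorm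
    rcases eq_or_ne a' b' with rfl | hne
    · norm_num at hnorm
    · rw [P.dist_corner t hne] at hnorm
      norm_num at hnorm
  · exact P.not_straight hne h ha hb

lemma exists_corner_eq_or_eq_add_sub {t : ι} {a b : Fin 3} (hab : a ≠ b) {z : ℂ}
    (ha : dist (P.corner t a) z = 1) (hb : dist (P.corner t b) z = 1) :
    ∃ c, c ≠ a ∧ c ≠ b ∧ (P.corner t c = z ∨ P.corner t c = P.corner t a + P.corner t b - z) := by
  have hthird : ∀ a b : Fin 3, ∃ c, c ≠ a ∧ c ≠ b := by decide
  obtain ⟨c, hca, hcb⟩ := hthird a b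
  exact ⟨c, hca, hcb, eq_or_eq_add_sub_of_dist_eq_one (P.dist_corner t hab) ha hb
    (P.dist_corner t hca.symm) (P.dist_corner t hcb.symm)⟩

lemma image_corner_injective : Function.Injective fun t ↦ Finset.univ.image (P.corner t) := by
  intro t t' h
  have hmem (a : Fin 3) : ∃ b, P.corner t' b = P.corner t a := by
    have hmem := Finset.mem_image_of_mem (P.corner t) (Finset.mem_univ a)
    rw [show Finset.univ.image (P.corner t) = _ from h] at hmem
    simpa using hmem
  obtain ⟨c, hc⟩ := hmem 0
  obtain ⟨d, hd⟩ := hmem 1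
  exact P.eq_of_common_edge zero_ne_one hc.symm hd.symm

section Graph

variable [Fintype ι]

/-- The graph whose edges are the sides of the triangles of a finite patch. -/
def graph : UnitDistGraph where
  V := Finset.univ.image fun x : ι × Fin 3 ↦ P.corner x.1 x.2
  E := ({x | x.2.1 ≠ x.2.2} : Finset (ι × Fin 3 × Fin 3)).image
    fun x ↦ {P.corner x.1 x.2.1, P.corner x.1 x.2.2}
  edge_sub := by
    simp only [Finset.forall_mem_image, Finset.insert_subset_iff, Finset.singleton_subset_iff]
    exact fun x _ ↦ ⟨Finset.mem_image_of_mem (fun x : ι × Fin 3 ↦ P.corner x.1 x.2)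
      (Finset.mem_univ (x.1, x.2.1)), Finset.mem_image_of_mem (fun x : ι × Fin 3 ↦ P.corner x.1 x.2)
      (Finset.mem_univ (x.1, x.2.2))⟩
  edge_pair := by
    simp only [Finset.forall_mem_image, Finset.mem_filter_univ]
    exact fun x hx ↦ ⟨_, _, (P.corner_injective x.1).ne hx, rfl, P.dist_corner x.1 hx⟩

lemma mem_graph_V {z : ℂ} : z ∈ P.graph.V ↔ ∃ t a, P.corner t a = z := by
  simp [graph]

lemma mem_graph_E {e : Finset ℂ} :
    e ∈ P.graph.E ↔ ∃ t a b, a ≠ b ∧ {P.corner t a, P.corner t b} = e := by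
  simp [graph]

lemma pair_mem_graph_E {x y : ℂ} :
    {x, y} ∈ P.graph.E ↔ ∃ t a b, a ≠ b ∧ P.corner t a = x ∧ P.corner t b = y := by
  rw [mem_graph_E]
  constructor
  · rintro ⟨t, a, b, hab, h⟩
    have h' : ({P.corner t a, P.corner t b} : Set ℂ) = {x, y} := by
      simpa using congrArg (fun s : Finset ℂ ↦ (s : Set ℂ)) h
    rcases Set.pair_eq_pair_iff.1 h' with ⟨hx, hy⟩ | ⟨hy, hx⟩
    · exact ⟨t, a, b, hab, hx, hy⟩
    · exact ⟨t, b, a, hab.symm, hx, hy⟩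
  · rintro ⟨t, a, b, hab, rfl, rfl⟩
    exact ⟨t, a, b, hab, rfl⟩

lemma exists_eq_pair_of_mem_edgeSeg {v : ℂ} (hv : v ∈ P.graph.V) {e : Finset ℂ}
    (he : e ∈ P.graph.E) (hve : v ∈ edgeSeg e) :
    ∃ t a b, a ≠ b ∧ P.corner t a = v ∧ e = {P.corner t a, P.corner t b} := by
  obtain ⟨s, c, rfl⟩ := P.mem_graph_V.1 hv
  obtain ⟨t, a, b, hab, rfl⟩ := P.mem_graph_E.1 he
  rw [edgeSeg_pair] at hve
  rcases P.eq_or_eq_of_corner_mem_segment hab hve with h | h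
  · exact ⟨t, a, b, hab, h.symm, rfl⟩
  · exact ⟨t, b, a, hab.symm, h.symm, Finset.pair_comm _ _⟩

lemma neighbors_corner {t t' : ι} {a b : Fin 3} (hab : P.corner t' b = P.corner t a)
    (hset : {s | P.corner t a ∈ Set.range (P.corner s)} = {t, t'}) :
    {z | {P.corner t a, z} ∈ P.graph.E} = P.corner t '' {a}ᶜ ∪ P.corner t' '' {b}ᶜ := by
  ext z
  simp only [Set.mem_ofPred_eq, pair_mem_graph_E]
  constructor
  · rintro ⟨s, c, d, hcd, hc, rfl⟩
    have hs : s ∈ ({t, t'} : Set ι) := hset ▸ ⟨c, hc⟩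
    rcases hs with rfl | rfl
    · obtain rfl := P.corner_injective s hc
      exact .inl ⟨d, hcd.symm, rfl⟩
    · obtain rfl := P.corner_injective s (hc.trans hab.symm)
      exact .inr ⟨d, hcd.symm, rfl⟩
  · rintro (⟨d, hd, rfl⟩ | ⟨d, hd, rfl⟩)
    · exact ⟨t, a, d, Ne.symm hd, rfl, rfl⟩
    · exact ⟨t', b, d, Ne.symm hd, hab, rfl⟩

lemma graph_regular4 (hP : ∀ t a, P.valence (P.corner t a) = 2) : P.graph.Regular4 := by
  intro v hv
  obtain ⟨t₀, a₀, rfl⟩ := P.mem_graph_V.1 hv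
  obtain ⟨t, t', hne, hset⟩ := Set.ncard_eq_two.1 (hP t₀ a₀)
  obtain ⟨a, ha⟩ : t ∈ {t | P.corner t₀ a₀ ∈ Set.range (P.corner t)} := hset ▸ Set.mem_insert t {t'}
  obtain ⟨b, hb⟩ : t' ∈ {t | P.corner t₀ a₀ ∈ Set.range (P.corner t)} := hset ▸ .inr rfl
  rw [← ha] at hset hb ⊢
  have hdisj : Disjoint (P.corner t '' {a}ᶜ) (P.corner t' '' {b}ᶜ) := by
    rw [Set.disjoint_left]
    rintro _ ⟨c, hc, rfl⟩ ⟨d, -, hd⟩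
    exact hne (P.eq_of_common_edge (Ne.symm hc) hb.symm hd.symm)
  have hcard (c : Fin 3) : ({c}ᶜ : Set (Fin 3)).ncard = 2 := by
    rw [Set.ncard_compl, Set.ncard_singleton, Nat.card_eq_fintype_card, Fintype.card_fin]
  rw [degree_eq_ncard_neighbors, P.neighbors_corner hb hset, Set.ncard_union_eq hdisj,
    Set.ncard_image_of_injective _ (P.corner_injective t),
    Set.ncard_image_of_injective _ (P.corner_injective t'), hcard, hcard]

/- The three sides could come from three triangles erected outwards on a "virtual" unit triangle,
but then two of them would have consecutive sides in line. -/
lemma exists_corners_eq_of_pairwise_mem {x y z : ℂ} (hxy : {x, y} ∈ P.graph.E)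
    (hyz : {y, z} ∈ P.graph.E) (hxz : {x, z} ∈ P.graph.E) :
    ∃ t a b c, P.corner t a = x ∧ P.corner t b = y ∧ P.corner t c = z := by
  obtain ⟨t, a, b, hab, rfl, rfl⟩ := P.pair_mem_graph_E.1 hxy
  obtain ⟨s, c, d, hcd, hc, rfl⟩ := P.pair_mem_graph_E.1 hyz
  obtain ⟨r, e, f, hef, he, hf⟩ := P.pair_mem_graph_E.1 hxz
  have hbz : dist (P.corner t b) (P.corner s d) = 1 := hc ▸ P.dist_corner s hcd
  have haz : dist (P.corner t a) (P.corner s d) = 1 := he ▸ hf ▸ P.dist_corner r hef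
  obtain ⟨g, hga, -, hg | hg⟩ := P.exists_corner_eq_or_eq_add_sub hab haz hbz
  · exact ⟨t, a, b, g, rfl, rfl, hg⟩
  obtain ⟨h, hhe, -, hh | hh⟩ := P.exists_corner_eq_or_eq_add_sub (t := r) (z := P.corner t b) hef
    (he ▸ P.dist_corner t hab) (by rw [hf, dist_comm, hbz])
  · exact ⟨r, e, h, f, he, hh, hf⟩
  · refine absurd ?_ (P.add_corner_ne he.symm hga hhe)
    rw [hg, hh, he, hf]
    ring

lemma graph_isUnitTriangle_iff (s : Finset ℂ) :
    P.graph.IsUnitTriangle s ↔ ∃ t, Finset.univ.image (P.corner t) = s := by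
  have hcard (t : ι) : (Finset.univ.image (P.corner t)).card = 3 := by
    rw [Finset.card_image_of_injective _ (P.corner_injective t), Finset.card_univ, Fintype.card_fin]
  constructor
  · rintro ⟨-, hs, he⟩
    obtain ⟨x, y, z, hxy, hxz, hyz, rfl⟩ := Finset.card_eq_three.1 hs
    obtain ⟨t, a, b, c, rfl, rfl, rfl⟩ := P.exists_corners_eq_of_pairwise_mem
      (he _ (by simp) _ (by simp) hxy) (he _ (by simp) _ (by simp) hyz)
      (he _ (by simp) _ (by simp) hxz)
    refine ⟨t, (Finset.eq_of_subset_of_card_le ?_ (by rw [hs, hcard])).symm⟩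
    simp [Finset.insert_subset_iff]
  · rintro ⟨t, rfl⟩
    refine ⟨?_, hcard t, ?_⟩
    · exact Finset.image_subset_iff.2 fun a _ ↦ P.mem_graph_V.2 ⟨t, a, rfl⟩
    · simp only [Finset.forall_mem_image]
      exact fun a _ b _ hab ↦ P.pair_mem_graph_E.2 ⟨t, a, b, ne_of_apply_ne _ hab, rfl, rfl⟩

lemma graph_triangleCount : P.graph.triangleCount = Fintype.card ι := by
  have hset : {s | P.graph.IsUnitTriangle s} = Set.range fun t ↦ Finset.univ.image (P.corner t) :=
    Set.ext P.graph_isUnitTriangle_iff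
  rw [triangleCount, hset, ← Set.image_univ,
    Set.ncard_image_of_injective _ P.image_corner_injective, Set.ncard_univ,
    Nat.card_eq_fintype_card]

lemma graph_onlyUnitTriangles : P.graph.OnlyUnitTriangles := by
  intro e he
  obtain ⟨t, a, b, -, rfl⟩ := P.mem_graph_E.1 he
  exact ⟨_, (P.graph_isUnitTriangle_iff _).2 ⟨t, rfl⟩, by simp [Finset.insert_subset_iff]⟩

lemma graph_nonOverlapping : P.graph.NonOverlapping := by
  intro s s' hs hs' hne
  obtain ⟨t, rfl⟩ := (P.graph_isUnitTriangle_iff _).1 hs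
  obtain ⟨t', rfl⟩ := (P.graph_isUnitTriangle_iff _).1 hs'
  simp only [Finset.coe_image, Finset.coe_univ, Set.image_univ, ← interior_inter]
  have hfin : (P.hull t ∩ P.hull t').Finite := (Set.finite_range (P.corner t)).subset
    fun z ⟨hz, hz'⟩ ↦ by
      obtain ⟨a, -, ha, -⟩ := P.exists_corner_of_mem_hull (fun h ↦ hne (by rw [h])) hz hz'
      exact ⟨a, ha⟩
  exact interior_eq_empty_iff_dense_compl.2 (hfin.countable.dense_compl ℝ)

lemma dist_eq_one_of_sideCovered {x y : ℂ} (hx : x ∈ P.graph.V) (hxy : x ≠ y)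
    (h : P.graph.SideCovered x y) : dist x y = 1 := by
  obtain ⟨S, hS, hseg⟩ := h
  have hclosed : ∀ e ∈ S, IsClosed (edgeSeg e) := fun e _ ↦ isClosed_edgeSeg e
  have hsub : openSegment ℝ x y ⊆ ⋃ e ∈ S, edgeSeg e := hseg ▸ openSegment_subset_segment ℝ x y
  obtain ⟨e, he, hxe, -⟩ := exists_closed_mem_left_inter_openSegment hclosed hsub
  obtain ⟨t, a, b, hab, rfl, rfl⟩ := P.exists_eq_pair_of_mem_edgeSeg hx (hS he) hxe
  by_cases hy : P.corner t b = y
  · exact hy ▸ P.dist_corner t hab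
  have hb : P.corner t b ∈ segment ℝ (P.corner t a) y := by
    rw [hseg]
    refine Set.mem_biUnion he ?_
    rw [edgeSeg_pair]
    exact right_mem_segment ℝ _ _
  have hsub' : openSegment ℝ (P.corner t b) y ⊆ ⋃ e ∈ S, edgeSeg e := by
    rw [← hseg]
    exact (openSegment_subset_segment ℝ _ _).trans
      ((convex_segment _ _).segment_subset hb (right_mem_segment ℝ _ _))
  obtain ⟨f, hf, hbf, p, hpf, hpy⟩ := exists_closed_mem_left_inter_openSegment hclosed hsub'
  obtain ⟨s, c, d, hcd, hc, rfl⟩ := P.exists_eq_pair_of_mem_edgeSeg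
    (P.mem_graph_V.2 ⟨t, b, rfl⟩) (hS hf) hbf
  rw [edgeSeg_pair, hc] at hpf
  have hpb : p - P.corner t b ≠ 0 := by
    rw [sub_ne_zero]
    rintro rfl
    exact hy (left_mem_openSegment_iff.1 hpy)
  have hray : SameRay ℝ (P.corner t b - P.corner t a) (P.corner s d - P.corner t b) := by
    have h₁ := (mem_segment_iff_wbtw.1 hb).sameRay_vsub
    have h₂ := (mem_segment_iff_wbtw.1 (openSegment_subset_segment ℝ _ _ hpy)).sameRay_vsub_left
    have h₃ := (mem_segment_iff_wbtw.1 hpf).sameRay_vsub_left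
    exact (h₁.trans h₂.symm fun h ↦ absurd (sub_eq_zero.1 h).symm hy).trans h₃
      fun h ↦ absurd h hpb
  have heq := hray.eq_of_norm_eq (by
    rw [← dist_eq_norm, ← dist_eq_norm, P.dist_corner t hab.symm, ← hc, P.dist_corner s hcd.symm])
  exact absurd (by linear_combination -heq) (P.add_corner_ne hc.symm hab hcd.symm)

lemma graph_noAdditionalTriangles : P.graph.NoAdditionalTriangles :=
  fun _ hx _ _ _ _ hxy _ _ _ _ h _ _ ↦ P.dist_eq_one_of_sideCovered hx hxy h

end Graph

section Copies

/-- The patch translated by `v`. -/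
def translate (v : ℂ) : TrianglePatch ι where
  corner t a := P.corner t a + v
  dist_corner t a b hab := by rw [dist_add_right, P.dist_corner t hab]
  exists_corner_of_mem_hull := by
    have hhull (t : ι) : convexHull ℝ (Set.range fun a ↦ P.corner t a + v) =
        AffineEquiv.vaddConst ℝ v '' P.hull t := by
      rw [← AffineEquiv.coe_toAffineMap, AffineMap.image_convexHull, ← Set.range_comp]
      rfl
    intro t t' hne z hz hz'
    rw [hhull] at hz hz'
    obtain ⟨w, hw, rfl⟩ := hz
    obtain ⟨w', hw', h⟩ := hz'
    obtain rfl := (AffineEquiv.vaddConst ℝ v).injective h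
    obtain ⟨a, b, ha, hb⟩ := P.exists_corner_of_mem_hull hne hw hw'
    exact ⟨a, b, congrArg (· + v) ha, congrArg (· + v) hb⟩
  not_straight t t' hne a b a' b' h ha hb hsum :=
    P.not_straight hne (add_right_cancel h) ha hb (by linear_combination hsum)

lemma valence_translate (v z : ℂ) : (P.translate v).valence (z + v) = P.valence z := by
  simp [valence, translate]

variable {κ : Type*} {τ : κ → Type*} (Q : ∀ k, TrianglePatch (τ k)) {K : κ → Set ℂ}
  (hdisj : Pairwise (Function.onFun Disjoint K)) (hconv : ∀ k, Convex ℝ (K k))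
  (hQ : ∀ k t a, (Q k).corner t a ∈ K k)

/-- The union of patches lying in pairwise disjoint convex sets. -/
def disjointUnion : TrianglePatch (Σ k, τ k) where
  corner s := (Q s.1).corner s.2
  dist_corner s := (Q s.1).dist_corner s.2
  exists_corner_of_mem_hull := by
    rintro ⟨k, t⟩ ⟨k', t'⟩ hne z hz hz'
    have hsub (k : κ) (t : τ k) : (Q k).hull t ⊆ K k :=
      convexHull_min (Set.range_subset_iff.2 (hQ k t)) (hconv k)
    obtain rfl := hdisj.eq (Set.not_disjoint_iff.2 ⟨z, hsub k t hz, hsub k' t' hz'⟩)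
    exact (Q k).exists_corner_of_mem_hull (fun h ↦ hne (congrArg (Sigma.mk k) h)) hz hz'
  not_straight := by
    rintro ⟨k, t⟩ ⟨k', t'⟩ hne a b a' b' h
    obtain rfl := hdisj.eq (Set.not_disjoint_iff.2 ⟨_, hQ k t a, h ▸ hQ k' t' b⟩)
    exact (Q k).not_straight (fun h ↦ hne (congrArg (Sigma.mk k) h)) h

lemma valence_disjointUnion {k : κ} {z : ℂ} (hz : z ∈ K k) :
    (disjointUnion Q hdisj hconv hQ).valence z = (Q k).valence z := by
  have hset : {s | z ∈ Set.range ((disjointUnion Q hdisj hconv hQ).corner s)} =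
      Sigma.mk k '' {t | z ∈ Set.range ((Q k).corner t)} := by
    ext ⟨k', t'⟩
    constructor
    · rintro ⟨a, rfl⟩
      obtain rfl := hdisj.eq (Set.not_disjoint_iff.2 ⟨_, hz, hQ k' t' a⟩)
      exact ⟨t', ⟨a, rfl⟩, rfl⟩
    · rintro ⟨t, ⟨a, ha⟩, h⟩
      cases h
      exact ⟨a, ha⟩
  rw [valence, hset, Set.ncard_image_of_injective _ sigma_mk_injective, valence]

lemma pairwise_disjoint_closedBall {R : ℝ} (hR : 0 ≤ R) (n : ℕ) : Pairwise (Function.onFun Disjoint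
    fun k : Fin n ↦ Metric.closedBall ((k : ℂ) * ((2 * R + 1 : ℝ) : ℂ)) R) := by
  intro j k hjk
  apply Metric.closedBall_disjoint_closedBall
  have hdist : 1 ≤ dist (j : ℕ) (k : ℕ) := Nat.pairwise_one_le_dist (Fin.val_ne_of_ne hjk)
  rw [← Nat.dist_cast_real, ← Complex.isometry_ofReal.dist_eq] at hdist
  rw [Complex.dist_eq, ← sub_mul, norm_mul, Complex.norm_of_nonneg (by positivity)]
  rw [Complex.dist_eq, Complex.ofReal_natCast, Complex.ofReal_natCast] at hdist
  nlinarith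

lemma exists_copies [Finite ι] (hP : ∀ t a, P.valence (P.corner t a) = 2) (n : ℕ) :
    ∃ Q : TrianglePatch (Σ _ : Fin n, ι), ∀ s a, Q.valence (Q.corner s a) = 2 := by
  obtain ⟨R, hR, hPR⟩ := (Set.finite_range fun x : ι × Fin 3 ↦ P.corner x.1 x.2).isBounded
    |>.exists_pos_norm_le
  let v (k : Fin n) : ℂ := k * ((2 * R + 1 : ℝ) : ℂ)
  have hball (k : Fin n) (t : ι) (a : Fin 3) :
      (P.translate (v k)).corner t a ∈ Metric.closedBall (v k) R := by
    simpa [translate] using hPR _ (Set.mem_range_self (t, a))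
  refine ⟨disjointUnion (fun k ↦ P.translate (v k)) (pairwise_disjoint_closedBall hR.le n)
    (fun _ ↦ convex_closedBall _ _) hball, fun ⟨k, t⟩ a ↦ ?_⟩
  exact (valence_disjointUnion (fun k ↦ P.translate (v k)) _ _ _ (hball k t a)).trans
    ((P.valence_translate _ _).trans (hP t a))

end Copies

lemma exists_graph_triangleCount_eq [Fintype ι] (hP : ∀ t a, P.valence (P.corner t a) = 2) (n : ℕ) :
    ∃ G : UnitDistGraph, (G.Regular4 ∧ G.NonOverlapping ∧ G.OnlyUnitTriangles ∧
      G.NoAdditionalTriangles) ∧ G.triangleCount = n * Fintype.card ι := by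
  obtain ⟨Q, hQ⟩ := P.exists_copies hP n
  refine ⟨Q.graph, ⟨Q.graph_regular4 hQ, Q.graph_nonOverlapping, Q.graph_onlyUnitTriangles,
    Q.graph_noAdditionalTriangles⟩, ?_⟩
  rw [graph_triangleCount, Fintype.card_sigma, Finset.sum_const, Finset.card_univ, Fintype.card_fin,
    smul_eq_mul]

end TrianglePatch

section Dihedral

open ComplexConjugate

variable {n : ℕ}

/-- The linear isometries of the plane permuting the `n`-th roots of unity: the symmetry group of
the regular `n`-gon. -/
def rootSymmetries (n : ℕ) : Subgroup (ℂ ≃ₗᵢ[ℝ] ℂ) where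
  carrier := {φ | ∀ z, φ z ^ n = 1 ↔ z ^ n = 1}
  mul_mem' hφ hψ z := (hφ _).trans (hψ z)
  one_mem' _ := Iff.rfl
  inv_mem' {φ} hφ z := by rw [← hφ, LinearIsometryEquiv.inv_def, φ.apply_symm_apply]

/-- The unit vector spanning the mirror of index `i`, for the two mirrors at angle `π / n`. -/
def mirrorDir (n : ℕ) (i : Fin 2) : ℂ := Complex.exp ((i * (Real.pi / n) : ℝ) * Complex.I)

/-- A linear form vanishing on the mirror of index `i`, signed so that it is nonnegative on the
sector between the two mirrors. -/
def mirrorForm (n : ℕ) (i : Fin 2) : ℂ →ₗ[ℝ] ℝ :=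
  (-1 : ℝ) ^ (i : ℕ) • Complex.imLm ∘ₗ LinearMap.mulLeft ℝ (conj (mirrorDir n i))

/-- The closed sector between the two mirrors, without its apex. -/
def sector (n : ℕ) : Set ℂ := {z | 0 < z.re ∧ ∀ i, 0 ≤ mirrorForm n i z}

lemma mirrorForm_apply (i : Fin 2) (z : ℂ) :
    mirrorForm n i z = (-1) ^ (i : ℕ) * (conj (mirrorDir n i) * z).im := rfl

lemma mirrorDir_zero : mirrorDir n 0 = 1 := by simp [mirrorDir]

lemma mirrorDir_one : mirrorDir n 1 = Complex.exp ((Real.pi / n : ℝ) * Complex.I) := by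
  simp [mirrorDir]

lemma mirrorForm_zero (z : ℂ) : mirrorForm n 0 z = z.im := by
  simp [mirrorForm_apply, mirrorDir_zero]

lemma mirrorDir_mul_conj (i : Fin 2) : mirrorDir n i * conj (mirrorDir n i) = 1 := by
  rw [Complex.mul_conj, Complex.normSq_eq_norm_sq, mirrorDir, Complex.norm_exp_ofReal_mul_I]
  norm_num

lemma mirrorDir_sq_pow (hn : n ≠ 0) (i : Fin 2) : (mirrorDir n i ^ 2) ^ n = 1 := by
  rw [mirrorDir, ← Complex.exp_nat_mul, ← Complex.exp_nat_mul, Complex.exp_eq_one_iff]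
  refine ⟨(i : ℕ), ?_⟩
  push_cast
  field_simp

lemma mirrorForm_one_polar (z : ℂ) :
    mirrorForm n 1 z = ‖z‖ * Real.sin (Real.pi / n - z.arg) := by
  conv_lhs => rw [mirrorForm_apply, mirrorDir_one, ← Complex.norm_mul_exp_arg_mul_I z]
  rw [← Complex.exp_conj, mul_left_comm, ← Complex.exp_add, map_mul, Complex.conj_I,
    Complex.conj_ofReal, mul_neg, neg_add_eq_sub, ← sub_mul, ← Complex.ofReal_sub,
    Complex.im_ofReal_mul, Complex.exp_ofReal_mul_I_im, ← neg_sub z.arg, Real.sin_neg]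
  norm_num

lemma convex_sector : Convex ℝ (sector n) := by
  have hset : sector n = {z | 0 < Complex.reLm z} ∩ ⋂ i, {z | 0 ≤ mirrorForm n i z} := by
    ext z
    simp [sector]
  rw [hset]
  exact (convex_halfSpace_gt Complex.reLm.isLinear 0).inter
    (convex_iInter fun i ↦ convex_halfSpace_ge (mirrorForm n i).isLinear 0)

lemma ne_zero_of_mem_sector {z : ℂ} (hz : z ∈ sector n) : z ≠ 0 := by
  rintro rfl
  exact hz.1.ne' rfl

lemma arg_nonneg_of_mem_sector {z : ℂ} (hz : z ∈ sector n) : 0 ≤ z.arg :=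
  Complex.arg_nonneg_iff.2 (mirrorForm_zero (n := n) z ▸ hz.2 0)

lemma arg_le_of_mem_sector {z : ℂ} (hz : z ∈ sector n) : z.arg ≤ Real.pi / n := by
  by_contra! hlt
  have hpi : 0 ≤ Real.pi / n := by positivity
  have hsin : Real.sin (Real.pi / n - z.arg) < 0 :=
    Real.sin_neg_of_neg_of_neg_pi_lt (by linarith) (by
      have := Complex.abs_arg_lt_pi_div_two_iff.2 (.inl hz.1)
      linarith [(abs_lt.1 this).2, Real.pi_pos])
  have := hz.2 1
  rw [mirrorForm_one_polar] at this
  exact this.not_gt (mul_neg_of_pos_of_neg (norm_pos_iff.2 (ne_zero_of_mem_sector hz)) hsin)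

lemma arg_pow_of_mem_sector (hn : n ≠ 0) {z : ℂ} (hz : z ∈ sector n) :
    (z ^ n).arg = n * z.arg := by
  have hn' : (0 : ℝ) < n := by positivity
  have hle : n * z.arg ≤ Real.pi := by
    rw [mul_comm, ← le_div_iff₀ hn']
    exact arg_le_of_mem_sector hz
  have hpos : 0 ≤ n * z.arg := mul_nonneg hn'.le (arg_nonneg_of_mem_sector hz)
  have hpow : z ^ n = (‖z‖ ^ n : ℝ) * Complex.exp ((n * z.arg : ℝ) * Complex.I) := by
    conv_lhs => rw [← Complex.norm_mul_exp_arg_mul_I z, mul_pow, ← Complex.exp_nat_mul]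
    push_cast
    ring_nf
  rw [hpow, Complex.exp_mul_I, Complex.arg_mul_cos_add_sin_mul_I
    (pow_pos (norm_pos_iff.2 (ne_zero_of_mem_sector hz)) n) ⟨by linarith [Real.pi_pos], hle⟩]

lemma im_pow_nonneg_of_mem_sector (hn : n ≠ 0) {z : ℂ} (hz : z ∈ sector n) : 0 ≤ (z ^ n).im := by
  rw [← Complex.arg_nonneg_iff, arg_pow_of_mem_sector hn hz]
  exact mul_nonneg n.cast_nonneg (arg_nonneg_of_mem_sector hz)

lemma pow_injOn_sector (hn : n ≠ 0) : Set.InjOn (· ^ n) (sector n) := by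
  intro x hx y hy hxy
  refine Complex.ext_norm_arg ?_ ?_
  · rw [← pow_left_inj₀ (norm_nonneg x) (norm_nonneg y) hn, ← norm_pow, ← norm_pow]
    exact congrArg _ hxy
  · rw [← mul_right_inj' (Nat.cast_ne_zero.2 hn : (n : ℝ) ≠ 0), ← arg_pow_of_mem_sector hn hx,
      ← arg_pow_of_mem_sector hn hy]
    exact congrArg _ hxy

lemma exists_mirrorForm_eq_zero (hn : n ≠ 0) {z : ℂ} (hz : z ∈ sector n) (him : (z ^ n).im = 0) :
    ∃ i, mirrorForm n i z = 0 := by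
  have harg := arg_pow_of_mem_sector hn hz
  rcases le_or_gt 0 (z ^ n).re with hre | hre
  · rw [Complex.arg_eq_zero_iff.2 ⟨hre, him⟩, zero_eq_mul, Nat.cast_eq_zero,
      or_iff_right hn] at harg
    exact ⟨0, (mirrorForm_zero z).trans (Complex.arg_eq_zero_iff.1 harg).2⟩
  · rw [Complex.arg_eq_pi_iff.2 ⟨hre, him⟩] at harg
    refine ⟨1, ?_⟩
    rw [mirrorForm_one_polar, harg, mul_div_cancel_left₀ _ (Nat.cast_ne_zero.2 hn), sub_self,
      Real.sin_zero, mul_zero]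

lemma mirrorForm_unique (hn : 2 ≤ n) {z : ℂ} (hz : z ∈ sector n) {i j : Fin 2}
    (hi : mirrorForm n i z = 0) (hj : mirrorForm n j z = 0) : i = j := by
  have key : ¬ (mirrorForm n 0 z = 0 ∧ mirrorForm n 1 z = 0) := by
    rintro ⟨h₀, h₁⟩
    rw [mirrorForm_zero] at h₀
    have hsin : 0 < Real.sin (Real.pi / n) := by
      have : (2 : ℝ) ≤ n := by exact_mod_cast hn
      exact Real.sin_pos_of_pos_of_lt_pi (by positivity) (div_lt_self Real.pi_pos (by linarith))
    rw [mirrorForm_one_polar, Complex.arg_eq_zero_iff.2 ⟨hz.1.le, h₀⟩, sub_zero] at h₁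
    exact (mul_pos (norm_pos_iff.2 (ne_zero_of_mem_sector hz)) hsin).ne' h₁
  fin_cases i <;> fin_cases j
  exacts [rfl, absurd ⟨hi, hj⟩ key, absurd ⟨hj, hi⟩ key, rfl]

lemma exists_root_mul_of_mem_rootSymmetries {φ : ℂ ≃ₗᵢ[ℝ] ℂ} (hφ : φ ∈ rootSymmetries n) :
    ∃ a : Circle, (a : ℂ) ^ n = 1 ∧ (φ = rotation a ∨ φ = Complex.conjLIE.trans (rotation a)) := by
  obtain ⟨a, ha⟩ := linear_isometry_complex φ
  have hφ1 : φ 1 = a := by rcases ha with rfl | rfl <;> simp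
  exact ⟨a, hφ1 ▸ (hφ 1).2 (one_pow n), ha⟩

lemma finite_rootSymmetries (hn : n ≠ 0) : Finite (rootSymmetries n) := by
  have hroots : {a : Circle | (a : ℂ) ^ n = 1}.Finite := by
    refine ((Polynomial.nthRootsFinset n (1 : ℂ)).finite_toSet.preimage
      Circle.coe_injective.injOn).subset fun a ha ↦ ?_
    exact (Polynomial.mem_nthRootsFinset (Nat.pos_of_ne_zero hn) _).2 ha
  refine Set.Finite.subset ((hroots.image rotation).union
    (hroots.image fun a ↦ Complex.conjLIE.trans (rotation a))) fun φ hφ ↦ ?_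
  obtain ⟨a, ha, rfl | rfl⟩ := exists_root_mul_of_mem_rootSymmetries hφ
  exacts [.inl ⟨a, ha, rfl⟩, .inr ⟨a, ha, rfl⟩]

/-- The reflection in the mirror of index `i`. -/
def mirrorReflection (n : ℕ) (i : Fin 2) : ℂ ≃ₗᵢ[ℝ] ℂ :=
  Complex.conjLIE.trans (rotation (Circle.exp (i * (Real.pi / n)) ^ 2))

lemma mirrorReflection_apply (i : Fin 2) (z : ℂ) :
    mirrorReflection n i z = mirrorDir n i ^ 2 * conj z := by
  change ((Circle.exp (i * (Real.pi / n)) ^ 2 : Circle) : ℂ) * conj z = _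
  rw [Circle.coe_pow, Circle.coe_exp, mirrorDir]

lemma mirrorReflection_mem (hn : n ≠ 0) (i : Fin 2) : mirrorReflection n i ∈ rootSymmetries n := by
  intro z
  rw [mirrorReflection_apply, mul_pow, mirrorDir_sq_pow hn, one_mul, ← map_pow, map_eq_one_iff]
  exact (starRingEnd ℂ).injective

lemma mirrorReflection_ne_one (i : Fin 2) : mirrorReflection n i ≠ 1 := by
  intro h
  have h₁ : mirrorDir n i ^ 2 = 1 := by
    simpa [mirrorReflection_apply] using DFunLike.congr_fun h 1
  have h₂ := DFunLike.congr_fun h Complex.I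
  rw [mirrorReflection_apply, h₁, Complex.conj_I, one_mul] at h₂
  exact Complex.I_ne_zero (self_eq_neg.1 h₂.symm)

lemma mirrorReflection_eq_self_iff (i : Fin 2) (z : ℂ) :
    mirrorReflection n i z = z ↔ mirrorForm n i z = 0 := by
  have h := mirrorDir_mul_conj (n := n) i
  rw [mirrorReflection_apply, mirrorForm_apply, mul_eq_zero_iff_left (pow_ne_zero _ (by norm_num)),
    ← Complex.conj_eq_iff_im, map_mul, Complex.conj_conj]
  constructor <;> intro hz
  · linear_combination (conj (mirrorDir n i)) * hz - mirrorDir n i * conj z * h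
  · linear_combination (mirrorDir n i) * hz + z * h

/- The `n`-th power maps the sector injectively into the closed upper half plane, and `x ^ n` is
invariant under a symmetry up to complex conjugation. -/
lemma eq_and_eq_one_or_reflection (hn : n ≠ 0) {φ : ℂ ≃ₗᵢ[ℝ] ℂ} (hφ : φ ∈ rootSymmetries n) {z : ℂ}
    (hz : z ∈ sector n) (hφz : φ z ∈ sector n) :
    φ z = z ∧ (φ = 1 ∨ ∃ i, mirrorForm n i z = 0 ∧ φ = mirrorReflection n i) := by
  have hz0 := ne_zero_of_mem_sector hz
  obtain ⟨a, ha, rfl | rfl⟩ := exists_root_mul_of_mem_rootSymmetries hφ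
  · have hfix : (a : ℂ) * z = z := pow_injOn_sector hn hφz hz (by
      simp only [rotation_apply, mul_pow, ha, one_mul])
    have ha1 : a = 1 := Circle.ext ((mul_eq_right₀ hz0).1 hfix)
    exact ⟨hfix, .inl (by rw [ha1, map_one])⟩
  · have hpow : (Complex.conjLIE.trans (rotation a) z) ^ n = conj (z ^ n) := by
      simp [mul_pow, ha]
    have him : (z ^ n).im = 0 := by
      have := im_pow_nonneg_of_mem_sector hn hφz
      rw [hpow, Complex.conj_im] at this
      linarith [im_pow_nonneg_of_mem_sector hn hz]
    have hfix := pow_injOn_sector hn hφz hz (hpow.trans (Complex.conj_eq_iff_im.2 him))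
    refine ⟨hfix, .inr ?_⟩
    obtain ⟨i, hi⟩ := exists_mirrorForm_eq_zero hn hz him
    refine ⟨i, hi, LinearIsometryEquiv.ext fun w ↦ ?_⟩
    have hai : (a : ℂ) * conj z = mirrorDir n i ^ 2 * conj z := by
      rw [← mirrorReflection_apply, (mirrorReflection_eq_self_iff i z).2 hi]
      exact hfix
    rw [mirrorReflection_apply, ← mul_right_cancel₀ ((map_ne_zero _).2 hz0) hai]
    rfl

lemma mem_sector_of_mirrorForm_nonneg (hn : 2 < n) {z : ℂ} (hz : ∀ i, 0 ≤ mirrorForm n i z)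
    (hne : ∃ i, mirrorForm n i z ≠ 0) : z ∈ sector n := by
  have hn' : (2 : ℝ) < n := by exact_mod_cast hn
  have hpos : 0 < Real.pi / n := div_pos Real.pi_pos (by linarith)
  have hlt : Real.pi / n < Real.pi / 2 := div_lt_div_of_pos_left Real.pi_pos two_pos hn'
  have hsin : 0 < Real.sin (Real.pi / n) :=
    Real.sin_pos_of_pos_of_lt_pi hpos (by linarith [Real.pi_pos])
  have hcos : 0 < Real.cos (Real.pi / n) :=
    Real.cos_pos_of_mem_Ioo ⟨by linarith [Real.pi_pos], hlt⟩
  have hre : Real.sin (Real.pi / n) * z.re =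
      mirrorForm n 1 z + Real.cos (Real.pi / n) * mirrorForm n 0 z := by
    rw [mirrorForm_zero, mirrorForm_apply, mirrorDir_one, Complex.mul_im, Complex.conj_re,
      Complex.conj_im, Complex.exp_ofReal_mul_I_re, Complex.exp_ofReal_mul_I_im]
    norm_num
  have hsum : 0 < mirrorForm n 1 z + Real.cos (Real.pi / n) * mirrorForm n 0 z := by
    obtain ⟨i, hi⟩ := hne
    have hi' := (hz i).lt_of_ne' hi
    fin_cases i
    · exact add_pos_of_nonneg_of_pos (hz 1) (mul_pos hcos hi')
    · exact add_pos_of_pos_of_nonneg hi' (mul_nonneg hcos.le (hz 0))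
  exact ⟨pos_of_mul_pos_right (hre ▸ hsum) hsin.le, hz⟩

lemma conj_mul_sub_add_eq_zero_of_reflection {i : Fin 2} {c z w : ℂ} (hc : mirrorForm n i c = 0)
    (hzw : mirrorReflection n i z + w = 2 * c) :
    conj (conj (mirrorDir n i) * (z - c)) + conj (mirrorDir n i) * (w - c) = 0 := by
  have hfix := (mirrorReflection_eq_self_iff i c).2 hc
  rw [mirrorReflection_apply] at hzw hfix
  rw [map_mul, Complex.conj_conj, map_sub]
  have h := mirrorDir_mul_conj (n := n) i
  linear_combination (conj (mirrorDir n i)) * (hzw - hfix) +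
    mirrorDir n i * (conj c - conj z) * h

end Dihedral

section ConvexHull

variable {E : Type*} [AddCommGroup E] [Module ℝ E] {s t : Set E} {z : E}

lemma mem_of_mem_convexHull_of_map_le (f : E →ₗ[ℝ] ℝ) (hz : z ∈ convexHull ℝ s)
    (hf : ∀ x ∈ s, f z ≤ f x) (huniq : {x ∈ s | f x = f z}.Subsingleton) : z ∈ s := by
  obtain ⟨ι, _, w, v, hw, hw_sum, hv, hwv⟩ := mem_convexHull_iff_exists_fintype.1 hz
  have hzero : ∑ i, w i * (f (v i) - f z) = 0 := by
    simp only [mul_sub, Finset.sum_sub_distrib, ← Finset.sum_mul, hw_sum, one_mul]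
    rw [← hwv]
    simp only [map_sum, map_smul, smul_eq_mul, sub_self]
  have hterm (i : ι) : w i = 0 ∨ f (v i) = f z := by
    rw [Finset.sum_eq_zero_iff_of_nonneg fun i _ ↦
      mul_nonneg (hw i) (sub_nonneg.2 (hf _ (hv i)))] at hzero
    exact (mul_eq_zero.1 (hzero i (Finset.mem_univ i))).imp_right sub_eq_zero.1
  obtain ⟨j, -, hj⟩ := Finset.exists_ne_zero_of_sum_ne_zero (hw_sum ▸ one_ne_zero)
  have hvj (i : ι) : w i • v i = w i • v j := by
    rcases hterm i with hi | hi
    · rw [hi, zero_smul, zero_smul]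
    · rw [huniq ⟨hv i, hi⟩ ⟨hv j, (hterm j).resolve_left hj⟩]
  rw [← hwv, Finset.sum_congr rfl fun i _ ↦ hvj i, ← Finset.sum_smul, hw_sum, one_smul]
  exact hv j

lemma mem_inter_of_mem_convexHull_of_map_lt (f : E →ₗ[ℝ] ℝ)
    (hf : ∀ x ∈ s, ∀ y ∈ t, x = y ∨ f x < f y) (hs : z ∈ convexHull ℝ s)
    (ht : z ∈ convexHull ℝ t) : z ∈ s ∩ t := by
  obtain ⟨x, hx, hzx⟩ :=
    (f.convexOn convex_univ).exists_ge_of_mem_convexHull (Set.subset_univ s) hs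
  obtain ⟨y, hy, hyz⟩ :=
    (f.concaveOn convex_univ).exists_le_of_mem_convexHull (Set.subset_univ t) ht
  obtain rfl : x = y := (hf x hx y hy).resolve_right (hyz.trans hzx).not_gt
  have hxz : f x = f z := hyz.antisymm hzx
  have hle (v) (hv : v ∈ s) : f v ≤ f z := by
    rcases hf v hv x hy with rfl | h
    exacts [hyz, h.le.trans hyz]
  have hge (v) (hv : v ∈ t) : f z ≤ f v := by
    rcases hf x hx v hv with rfl | h
    exacts [hzx, hzx.trans h.le]
  constructor
  · refine mem_of_mem_convexHull_of_map_le (-f) hs (fun v hv ↦ neg_le_neg (hle v hv)) ?_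
    refine Set.subsingleton_of_forall_eq x fun v hv ↦ (hf v hv.1 x hy).resolve_right ?_
    exact (hxz.trans (neg_injective hv.2).symm).not_gt
  · refine mem_of_mem_convexHull_of_map_le f ht hge ?_
    refine Set.subsingleton_of_forall_eq x fun v hv ↦ ((hf x hx v hv.1).resolve_right ?_).symm
    exact (hv.2.trans hxz.symm).not_gt

end ConvexHull

/-- A triangle patch in the sector between two mirrors at angle `π / n`, whose images under the
group generated by the mirrors fit together to a patch with all valences equal to two. -/
structure HalfWedge (ι : Type*) (n : ℕ) extends TrianglePatch ι where
  corner_mem_sector : ∀ t a, corner t a ∈ sector n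
  corner_unique_on_mirror : ∀ t i a b, mirrorForm n i (corner t a) = 0 →
    mirrorForm n i (corner t b) = 0 → a = b
  valence_of_mirror : ∀ t a i, mirrorForm n i (corner t a) = 0 →
    toTrianglePatch.valence (corner t a) = 1
  valence_of_not_mirror : ∀ t a, (∀ i, mirrorForm n i (corner t a) ≠ 0) →
    toTrianglePatch.valence (corner t a) = 2
  not_straight_mirror : ∀ t i a a' b', mirrorForm n i (corner t a) = 0 → a' ≠ a → b' ≠ a →
    mirrorReflection n i (corner t a') + corner t b' ≠ 2 * corner t a

namespace HalfWedge

variable {ι : Type*} {n : ℕ} (W : HalfWedge ι n)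

lemma hull_subset_sector (t : ι) : W.hull t ⊆ sector n :=
  convexHull_min (Set.range_subset_iff.2 (W.corner_mem_sector t)) convex_sector

lemma mem_range_corner_of_mirrorForm_eq_zero {t : ι} {z : ℂ} (hz : z ∈ W.hull t) {i : Fin 2}
    (hi : mirrorForm n i z = 0) : z ∈ Set.range (W.corner t) := by
  refine mem_of_mem_convexHull_of_map_le (mirrorForm n i) hz
    (Set.forall_mem_range.2 fun a ↦ hi ▸ (W.corner_mem_sector t a).2 i) ?_
  rw [hi]
  rintro _ ⟨⟨a, rfl⟩, ha⟩ _ ⟨⟨b, rfl⟩, hb⟩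
  rw [W.corner_unique_on_mirror t i a b ha hb]

lemma eq_and_eq_or_mul_eq_reflection (hn : n ≠ 0) {g h : rootSymmetries n} {z w : ℂ}
    (hz : z ∈ sector n) (hw : w ∈ sector n) (hzw : g.1 z = h.1 w) :
    w = z ∧ (g = h ∨ ∃ i, mirrorForm n i z = 0 ∧ g.1 = h.1 * mirrorReflection n i) := by
  have hmove : (h⁻¹ * g).1 z = w := (LinearIsometryEquiv.symm_apply_eq _).2 hzw
  obtain ⟨hfix, hone | ⟨i, hi, hrefl⟩⟩ :=
    eq_and_eq_one_or_reflection hn (h⁻¹ * g).2 hz (hmove ▸ hw)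
  · exact ⟨hmove.symm.trans hfix, .inl (inv_mul_eq_one.1 (Subtype.ext hone)).symm⟩
  · exact ⟨hmove.symm.trans hfix, .inr ⟨i, hi, eq_mul_of_inv_mul_eq hrefl⟩⟩

lemma eq_of_valence_eq_one {t t' : ι} {z : ℂ} (h : W.valence z = 1)
    (ht : z ∈ Set.range (W.corner t)) (ht' : z ∈ Set.range (W.corner t')) : t = t' := by
  obtain ⟨s, hs⟩ := Set.ncard_eq_one.1 h
  exact (Set.ext_iff.1 hs t |>.1 ht).trans (Set.ext_iff.1 hs t' |>.1 ht').symm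

/-- The images of the triangles of a half wedge under all symmetries. -/
def unfold (hn : n ≠ 0) : TrianglePatch (ι × rootSymmetries n) where
  corner p a := p.2.1 (W.corner p.1 a)
  dist_corner p a b hab := (p.2.1.dist_map _ _).trans (W.dist_corner p.1 hab)
  exists_corner_of_mem_hull := by
    have hhull (g : ℂ ≃ₗᵢ[ℝ] ℂ) (t : ι) :
        convexHull ℝ (Set.range fun a ↦ g (W.corner t a)) = g '' W.hull t := by
      rw [Set.range_comp' g]
      exact (g.toLinearEquiv.toLinearMap.image_convexHull _).symm
    rintro ⟨t, g⟩ ⟨t', g'⟩ hne z hz hz'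
    rw [hhull] at hz hz'
    obtain ⟨w, hw, rfl⟩ := hz
    obtain ⟨w', hw', hww'⟩ := hz'
    obtain ⟨rfl, rfl | ⟨i, hi, -⟩⟩ := eq_and_eq_or_mul_eq_reflection hn
      (W.hull_subset_sector t hw) (W.hull_subset_sector t' hw') hww'.symm
    · obtain ⟨a, b, ha, hb⟩ := W.exists_corner_of_mem_hull (by rintro rfl; exact hne rfl) hw hw'
      exact ⟨a, b, congrArg g.1 ha, congrArg g.1 hb⟩
    · obtain ⟨a, ha⟩ := W.mem_range_corner_of_mirrorForm_eq_zero hw hi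
      obtain ⟨b, hb⟩ := W.mem_range_corner_of_mirrorForm_eq_zero hw' hi
      exact ⟨a, b, congrArg g.1 ha, (congrArg g'.1 hb).trans hww'⟩
  not_straight := by
    rintro ⟨t, g⟩ ⟨t', g'⟩ hne a b a' b' hab ha' hb' hsum
    obtain ⟨hcorner, rfl | ⟨i, hi, hg⟩⟩ := eq_and_eq_or_mul_eq_reflection hn
      (W.corner_mem_sector t a) (W.corner_mem_sector t' b) hab
    · refine W.not_straight (by rintro rfl; exact hne rfl) hcorner.symm ha' hb' (g.1.injective ?_)
      rw [map_add, two_mul, map_add, ← two_mul]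
      exact hsum
    · obtain rfl := W.eq_of_valence_eq_one (W.valence_of_mirror t a i hi) ⟨a, rfl⟩ ⟨b, hcorner⟩
      obtain rfl := W.corner_injective t hcorner
      refine W.not_straight_mirror t i b a' b' hi ha' hb' (g'.1.injective ?_)
      rw [map_add, two_mul, map_add, ← two_mul]
      exact (congrArg₂ _ (DFunLike.congr_fun hg _).symm rfl).trans (hsum.trans (congrArg _ hab))

lemma corner_mem_range_unfold_iff (hn : n ≠ 0) (t s : ι) (g h : rootSymmetries n) (a : Fin 3) :
    (W.unfold hn).corner (t, g) a ∈ Set.range ((W.unfold hn).corner (s, h)) ↔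
      W.corner t a ∈ Set.range (W.corner s) ∧ (h = g ∨
        ∃ i, mirrorForm n i (W.corner t a) = 0 ∧ h.1 = g.1 * mirrorReflection n i) := by
  constructor
  · rintro ⟨b, hb⟩
    obtain ⟨hcorner, hgh⟩ := eq_and_eq_or_mul_eq_reflection hn
      (W.corner_mem_sector s b) (W.corner_mem_sector t a) hb
    exact ⟨⟨b, hcorner.symm⟩, hcorner ▸ hgh⟩
  · rintro ⟨⟨b, hb⟩, rfl | ⟨i, hi, hh⟩⟩
    · exact ⟨b, congrArg h.1 hb⟩
    · refine ⟨b, ?_⟩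
      change h.1 (W.corner s b) = g.1 (W.corner t a)
      rw [hh, hb, LinearIsometryEquiv.coe_mul, Function.comp_apply,
        (mirrorReflection_eq_self_iff i _).2 hi]

lemma valence_unfold_of_mirror (hn : 2 ≤ n) (t : ι) (g : rootSymmetries n) (a : Fin 3) (i : Fin 2)
    (hi : mirrorForm n i (W.corner t a) = 0) :
    (W.unfold (by lia)).valence ((W.unfold (by lia)).corner (t, g) a) = 2 := by
  have hn0 : n ≠ 0 := by lia
  let g' : rootSymmetries n := g * ⟨_, mirrorReflection_mem hn0 i⟩
  have hset : {q | (W.unfold hn0).corner (t, g) a ∈ Set.range ((W.unfold hn0).corner q)} =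
      {(t, g), (t, g')} := by
    ext ⟨s, h⟩
    rw [Set.mem_ofPred_eq, corner_mem_range_unfold_iff]
    constructor
    · rintro ⟨hs, hgh⟩
      obtain rfl := W.eq_of_valence_eq_one (W.valence_of_mirror t a i hi) ⟨a, rfl⟩ hs
      obtain rfl | ⟨j, hj, hh⟩ := hgh
      · exact .inl rfl
      · obtain rfl := mirrorForm_unique hn (W.corner_mem_sector t a) hi hj
        exact .inr (Prod.ext rfl (Subtype.ext hh))
    · rintro (heq | heq) <;> cases heq
      exacts [⟨⟨a, rfl⟩, .inl rfl⟩, ⟨⟨a, rfl⟩, .inr ⟨i, hi, rfl⟩⟩]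
  rw [TrianglePatch.valence, hset, Set.ncard_pair]
  intro heq
  exact mirrorReflection_ne_one i (left_eq_mul.1 (congrArg (fun q ↦ q.2.1) heq))

lemma valence_unfold_of_not_mirror (hn : n ≠ 0) (t : ι) (g : rootSymmetries n) (a : Fin 3)
    (hmirror : ∀ i, mirrorForm n i (W.corner t a) ≠ 0) :
    (W.unfold hn).valence ((W.unfold hn).corner (t, g) a) = 2 := by
  have hset : {q | (W.unfold hn).corner (t, g) a ∈ Set.range ((W.unfold hn).corner q)} =
      (·, g) '' {s | W.corner t a ∈ Set.range (W.corner s)} := by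
    ext ⟨s, h⟩
    rw [Set.mem_ofPred_eq, corner_mem_range_unfold_iff]
    constructor
    · rintro ⟨hs, rfl | ⟨i, hi, -⟩⟩
      exacts [⟨s, hs, rfl⟩, (hmirror i hi).elim]
    · rintro ⟨r, hr, heq⟩
      cases heq
      exact ⟨hr, .inl rfl⟩
  rw [TrianglePatch.valence, hset, Set.ncard_image_of_injective _ (Prod.mk_left_injective g)]
  exact W.valence_of_not_mirror t a hmirror

lemma valence_unfold (hn : 2 ≤ n) (p : ι × rootSymmetries n) (a : Fin 3) :
    (W.unfold (by lia)).valence ((W.unfold (by lia)).corner p a) = 2 := by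
  by_cases hmirror : ∃ i, mirrorForm n i (W.corner p.1 a) = 0
  · obtain ⟨i, hi⟩ := hmirror
    exact W.valence_unfold_of_mirror hn p.1 p.2 a i hi
  · exact W.valence_unfold_of_not_mirror _ p.1 p.2 a (not_exists.1 hmirror)

end HalfWedge

section NewtonKantorovich

lemma norm_exp_sub_exp_sub_le {x y r : ℝ} (hx : |x| ≤ r) (hy : |y| ≤ r) :
    ‖Complex.exp (x * Complex.I) - Complex.exp (y * Complex.I) - (x - y) * Complex.I‖
      ≤ r * |x - y| := by
  have hderiv : ∀ t ∈ Set.Icc (-r) r,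
      HasDerivWithinAt (fun t : ℝ ↦ Complex.exp (t * Complex.I) - t * Complex.I)
        ((Complex.exp (Complex.I * t) - 1) * Complex.I) (Set.Icc (-r) r) t := fun t _ ↦ by
    have hline : HasDerivAt (fun t : ℝ ↦ (t : ℂ) * Complex.I) Complex.I t := by
      simpa using (HasDerivAt.ofReal_comp (hasDerivAt_id t)).mul_const Complex.I
    refine ((hline.cexp.sub hline).congr_deriv ?_).hasDerivWithinAt
    rw [mul_comm Complex.I (t : ℂ), sub_one_mul]
  have hbound : ∀ t ∈ Set.Icc (-r) r,
      ‖(Complex.exp (Complex.I * t) - 1) * Complex.I‖ ≤ r := fun t ht ↦ by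
    rw [norm_mul, Complex.norm_I, mul_one]
    exact (Real.norm_exp_I_mul_ofReal_sub_one_le).trans (abs_le.2 ht)
  rw [sub_mul, sub_sub_sub_comm]
  exact (convex_Icc (-r) r).norm_image_sub_le_of_norm_hasDerivWithin_le hderiv hbound
    (abs_le.1 hy) (abs_le.1 hx)

lemma exists_mem_closedBall_eq_zero {E F : Type*} [NormedAddCommGroup E] [CompleteSpace E]
    [Zero F] {f : E → F} {A : F → E} (hA : ∀ y, A y = 0 → y = 0) {r : ℝ} (hr : 0 ≤ r)
    (hlip : LipschitzOnWith (1 / 2) (fun x ↦ x - A (f x)) (Metric.closedBall 0 r))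
    (h0 : ‖A (f 0)‖ ≤ r / 2) : ∃ x ∈ Metric.closedBall 0 r, f x = 0 := by
  have h0mem : (0 : E) ∈ Metric.closedBall 0 r := Metric.mem_closedBall_self hr
  have hmaps : Set.MapsTo (fun x ↦ x - A (f x)) (Metric.closedBall 0 r)
      (Metric.closedBall 0 r) := fun x hx ↦ by
    have hdist := hlip.dist_le_mul x hx 0 h0mem
    rw [mem_closedBall_zero_iff] at hx ⊢
    calc ‖x - A (f x)‖ = ‖((x - A (f x)) - (0 - A (f 0))) + (0 - A (f 0))‖ := by
          rw [sub_add_cancel]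
      _ ≤ 1 / 2 * ‖x‖ + ‖A (f 0)‖ := by
          refine (norm_add_le _ _).trans (add_le_add ?_ (by rw [zero_sub, norm_neg]))
          simpa [dist_eq_norm] using hdist
      _ ≤ r := by linarith
  obtain ⟨x, hx, hfix, -⟩ := ContractingWith.exists_fixedPoint'
    Metric.isClosed_closedBall.isComplete hmaps
    ⟨by norm_num, hlip.mapsToRestrict hmaps⟩ h0mem (edist_ne_top _ _)
  exact ⟨x, hx, hA _ (sub_eq_self.1 hfix)⟩

variable {ι : Type*} [Fintype ι]

/-- The imaginary parts of the combinations, with coefficient rows `W`, of the unit complex numbers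
with arguments `x`. -/
def phaseSystem {κ : Type*} (W : Matrix κ ι ℂ) (x : ι → ℝ) (l : κ) : ℝ :=
  (∑ j, W l j * Complex.exp (x j * Complex.I)).im

lemma mulVec_phaseSystem {κ : Type*} [Fintype κ] (A : Matrix ι κ ℝ) (W : Matrix κ ι ℂ)
    (x : ι → ℝ) : A.mulVec (phaseSystem W x) = phaseSystem (A.map Complex.ofReal * W) x := by
  funext i
  simp only [Matrix.mulVec, dotProduct, phaseSystem, Matrix.mul_apply, Matrix.map_apply,
    ← Complex.im_ofReal_mul, ← Complex.im_sum, Finset.mul_sum, Finset.sum_mul, mul_assoc]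
  exact congrArg Complex.im Finset.sum_comm

lemma lipschitzOnWith_sub_phaseSystem [DecidableEq ι] {B : Matrix ι ι ℂ} {r : ℝ} {c : NNReal}
    (hB : ∀ i, ∑ j, (|(1 : Matrix ι ι ℝ) i j - (B i j).re| + r * ‖B i j‖) ≤ c) :
    LipschitzOnWith c (fun x ↦ x - phaseSystem B x) (Metric.closedBall 0 r) := by
  have hball {x : ι → ℝ} (hx : x ∈ Metric.closedBall 0 r) (j : ι) : |x j| ≤ r :=
    (norm_le_pi_norm x j).trans (mem_closedBall_zero_iff.1 hx)
  refine LipschitzOnWith.of_dist_le_mul fun x hx y hy ↦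
    (dist_pi_le_iff (by positivity)).2 fun i ↦ ?_
  let rem (j : ι) : ℂ := Complex.exp (x j * Complex.I) - Complex.exp (y j * Complex.I)
    - (x j - y j) * Complex.I
  have hsplit : (x - phaseSystem B x) i - (y - phaseSystem B y) i
      = ∑ j, (((1 : Matrix ι ι ℝ) i j - (B i j).re) * (x j - y j) - (B i j * rem j).im) := by
    have hlin (j : ι) : (B i j * rem j).im = (B i j * Complex.exp (x j * Complex.I)).im
        - (B i j * Complex.exp (y j * Complex.I)).im - (B i j).re * (x j - y j) := by
      simp only [rem, mul_sub, Complex.sub_im, Complex.mul_im, Complex.mul_re, Complex.sub_re,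
        Complex.ofReal_re, Complex.ofReal_im, Complex.I_re, Complex.I_im]
      ring
    simp only [hlin, sub_mul, Finset.sum_sub_distrib, Matrix.one_apply, ite_mul, one_mul,
      zero_mul, Finset.sum_ite_eq, Finset.mem_univ, if_true, phaseSystem, Complex.im_sum,
      Pi.sub_apply]
    ring
  rw [Real.dist_eq, hsplit]
  calc |∑ j, (((1 : Matrix ι ι ℝ) i j - (B i j).re) * (x j - y j) - (B i j * rem j).im)|
      ≤ ∑ j, (|(1 : Matrix ι ι ℝ) i j - (B i j).re| + r * ‖B i j‖) * |x j - y j| := by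
        refine (Finset.abs_sum_le_sum_abs _ _).trans (Finset.sum_le_sum fun j _ ↦ ?_)
        refine (abs_sub _ _).trans ?_
        rw [add_mul, abs_mul, mul_assoc, mul_left_comm]
        gcongr
        refine (Complex.abs_im_le_norm _).trans ?_
        rw [norm_mul]
        gcongr
        exact norm_exp_sub_exp_sub_le (hball hx j) (hball hy j)
    _ ≤ ∑ j, (|(1 : Matrix ι ι ℝ) i j - (B i j).re| + r * ‖B i j‖) * dist x y := by
        have hr : 0 ≤ r := dist_nonneg.trans hx
        gcongr with j
        exact dist_le_pi_dist x y j
    _ ≤ c * dist x y := by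
        rw [← Finset.sum_mul]
        exact mul_le_mul_of_nonneg_right (hB i) dist_nonneg

lemma det_ne_zero_of_sum_abs_one_sub_lt_one [DecidableEq ι] {M : Matrix ι ι ℝ}
    (hM : ∀ i, ∑ j, |(1 : Matrix ι ι ℝ) i j - M i j| < 1) : M.det ≠ 0 := by
  refine det_ne_zero_of_sum_row_lt_diag fun i ↦ ?_
  have hrow := hM i
  rw [← Finset.add_sum_erase _ _ (Finset.mem_univ i), Matrix.one_apply_eq,
    Finset.sum_congr rfl fun j hj ↦ by
      rw [Matrix.one_apply_ne (Finset.ne_of_mem_erase hj).symm, zero_sub, abs_neg]] at hrow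
  have hdiag : 1 - |M i i| ≤ |1 - M i i| := by
    simpa only [abs_one] using abs_sub_abs_le_abs_sub 1 (M i i)
  simp only [Real.norm_eq_abs]
  linarith

/-- The Newton–Kantorovich theorem for phase systems, with `A` an approximate inverse of the
Jacobian of the system at the origin. -/
theorem exists_phaseSystem_eq_zero [DecidableEq ι] (A : Matrix ι ι ℝ) (W : Matrix ι ι ℂ) {r : ℝ}
    (hr : 0 ≤ r)
    (hjac : ∀ i, ∑ j, (|(1 : Matrix ι ι ℝ) i j - ((A.map Complex.ofReal * W) i j).re|
      + r * ‖(A.map Complex.ofReal * W) i j‖) ≤ 1 / 2)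
    (hstart : ∀ i, |(∑ j, (A.map Complex.ofReal * W) i j).im| ≤ r / 2) :
    ∃ x : ι → ℝ, (∀ j, |x j| ≤ r) ∧ phaseSystem W x = 0 := by
  have hdet : A.det ≠ 0 := by
    have hprod : (A * W.map Complex.re).det ≠ 0 := by
      refine det_ne_zero_of_sum_abs_one_sub_lt_one fun i ↦ lt_of_le_of_lt ?_ one_half_lt_one
      refine (Finset.sum_le_sum fun j _ ↦ ?_).trans (hjac i)
      simp only [Matrix.mul_apply, Matrix.map_apply, Complex.re_sum, Complex.re_ofReal_mul]
      exact le_add_of_nonneg_right (by positivity)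
    rw [Matrix.det_mul] at hprod
    exact left_ne_zero_of_mul hprod
  obtain ⟨x, hx, hzero⟩ := exists_mem_closedBall_eq_zero (f := phaseSystem W) (A := A.mulVec)
    (fun _ ↦ Matrix.eq_zero_of_mulVec_eq_zero hdet) hr
    (by simpa only [mulVec_phaseSystem] using
      lipschitzOnWith_sub_phaseSystem (c := 1 / 2) (by simpa using hjac))
    (by
      rw [mulVec_phaseSystem]
      exact (pi_norm_le_iff_of_nonneg (by positivity)).2 (by simpa [phaseSystem] using hstart))
  exact ⟨x, fun j ↦ (norm_le_pi_norm x j).trans (mem_closedBall_zero_iff.1 hx), hzero⟩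

end NewtonKantorovich

section Certificate

open Matrix

variable {N E : ℝ} {z : ℂ} {b : GaussianInt}

lemma norm_toComplex_le (b : GaussianInt) : ‖(b : ℂ)‖ ≤ |(b.re : ℝ)| + |(b.im : ℝ)| := by
  simpa using Complex.norm_le_abs_re_add_abs_im b

lemma mul_abs_sub_re_le (hN : 0 ≤ N) (h : ‖N * z - b‖ ≤ E) (d : ℝ) :
    N * |d - z.re| ≤ |N * d - b.re| + E := by
  have hre : |N * z.re - b.re| ≤ E := by simpa using (Complex.abs_re_le_norm _).trans h
  calc N * |d - z.re| = |(N * d - b.re) - (N * z.re - b.re)| := by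
        rw [sub_sub_sub_cancel_right, ← mul_sub, abs_mul, abs_of_nonneg hN]
    _ ≤ |N * d - b.re| + E := (abs_sub _ _).trans (add_le_add_right hre _)

lemma mul_norm_le (hN : 0 ≤ N) (h : ‖N * z - b‖ ≤ E) :
    N * ‖z‖ ≤ |(b.re : ℝ)| + |(b.im : ℝ)| + E :=
  calc N * ‖z‖ = ‖N * z‖ := by rw [norm_mul, Complex.norm_of_nonneg hN]
    _ ≤ ‖(b : ℂ)‖ + ‖N * z - b‖ := norm_le_insert' _ _
    _ ≤ _ := add_le_add (norm_toComplex_le b) h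

lemma mul_abs_im_sum_le {ι : Type*} [Fintype ι] {z : ι → ℂ} {b : ι → GaussianInt} (hN : 0 ≤ N)
    (h : ∀ j, ‖N * z j - b j‖ ≤ E) :
    N * |(∑ j, z j).im| ≤ |∑ j, ((b j).im : ℝ)| + Fintype.card ι * E := by
  have hterm (j : ι) : |N * (z j).im - (b j).im| ≤ E := by
    simpa using (Complex.abs_im_le_norm _).trans (h j)
  have hsum : |∑ j, (N * (z j).im - (b j).im)| ≤ Fintype.card ι * E := by
    refine (Finset.abs_sum_le_sum_abs _ _).trans ?_
    rw [← nsmul_eq_mul]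
    exact Finset.sum_le_card_nsmul _ _ _ fun j _ ↦ hterm j
  rw [Finset.sum_sub_distrib, ← Finset.mul_sum, ← Complex.im_sum] at hsum
  calc N * |(∑ j, z j).im| = |N * (∑ j, z j).im| := by rw [abs_mul, abs_of_nonneg hN]
    _ ≤ |∑ j, ((b j).im : ℝ)| + |N * (∑ j, z j).im - ∑ j, ((b j).im : ℝ)| :=
      sub_le_iff_le_add'.1 (abs_sub_abs_le_abs_sub _ _)
    _ ≤ _ := add_le_add_right hsum _

/-- The Newton–Kantorovich theorem for phase systems, in the form of inequalities between integers:
`B` approximates `N` times the preconditioned matrix with error `E`, and `R⁻¹` is the radius. -/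
theorem exists_phaseSystem_eq_zero_of_approx {ι : Type*} [Fintype ι] [DecidableEq ι]
    (A : Matrix ι ι ℝ) (W : Matrix ι ι ℂ) (B : Matrix ι ι GaussianInt) {N R E : ℕ}
    (hN : 0 < N) (hR : 0 < R)
    (hB : ∀ i j, ‖((N : ℝ) : ℂ) * (A.map Complex.ofReal * W) i j - B i j‖ ≤ E)
    (hjac : ∀ i, 2 * ∑ j, (R * (|N * (1 : Matrix ι ι ℤ) i j - (B i j).re| + E) +
      (|(B i j).re| + |(B i j).im| + E)) ≤ N * R)
    (hstart : ∀ i, 2 * R * (|∑ j, (B i j).im| + Fintype.card ι * E) ≤ N) :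
    ∃ x : ι → ℝ, (∀ j, |x j| ≤ (R : ℝ)⁻¹) ∧ phaseSystem W x = 0 := by
  have hN' : (0 : ℝ) < N := Nat.cast_pos.2 hN
  have hR' : (0 : ℝ) < R := Nat.cast_pos.2 hR
  refine exists_phaseSystem_eq_zero A W (by positivity) (fun i ↦ ?_) fun i ↦ ?_
  · have hcert : 2 * ∑ j, (R * (|N * (1 : Matrix ι ι ℝ) i j - (B i j).re| + E) +
        (|((B i j).re : ℝ)| + |((B i j).im : ℝ)| + E)) ≤ N * R := by
      have h := (Int.cast_le (R := ℝ)).2 (hjac i)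
      push_cast [Matrix.one_apply] at h
      simpa only [Matrix.one_apply] using h
    have hsum := Finset.sum_le_sum fun j (_ : j ∈ Finset.univ) ↦ add_le_add
      (mul_le_mul_of_nonneg_left (mul_abs_sub_re_le hN'.le (hB i j) ((1 : Matrix ι ι ℝ) i j))
        hR'.le) (mul_norm_le hN'.le (hB i j))
    refine le_of_mul_le_mul_left ?_ (mul_pos hN' hR')
    rw [Finset.mul_sum]
    refine (Finset.sum_congr rfl fun j _ ↦ ?_).trans_le (hsum.trans (by linarith))
    field_simp
  · have hcert : 2 * R * (|∑ j, ((B i j).im : ℝ)| + Fintype.card ι * E) ≤ N := by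
      exact_mod_cast hstart i
    have him := mul_le_mul_of_nonneg_left (mul_abs_im_sum_le hN'.le (hB i))
      (by positivity : (0 : ℝ) ≤ 2 * R)
    field_simp
    refine le_of_mul_le_mul_left ?_ hN'
    linarith

end Certificate

section Eisenstein

/-- The ring of Eisenstein integers `ℤ[ω]`, written with the sixth root of unity `ω = exp(πi/3)`, so
that `ω² = -1 + ω`. -/
abbrev EisensteinInt : Type := QuadraticAlgebra ℤ (-1) 1

/-- The sixth root of unity `ω` in the Eisenstein integers. -/
def sixthRoot : EisensteinInt := ⟨0, 1⟩

/-- The embedding of the Eisenstein integers into the plane. -/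
def eisensteinToComplex : EisensteinInt →ₐ[ℤ] ℂ :=
  QuadraticAlgebra.lift ⟨⟨1 / 2, √3 / 2⟩, by
    have h3 : √3 * √3 = 3 := Real.mul_self_sqrt (by norm_num)
    refine Complex.ext ?_ ?_
    · norm_num [Complex.mul_re]
      linarith
    · norm_num [Complex.mul_im]
      ring⟩

lemma eisensteinToComplex_apply (c : EisensteinInt) :
    eisensteinToComplex c = c.re + c.im * ⟨1 / 2, √3 / 2⟩ := by
  simp [eisensteinToComplex, QuadraticAlgebra.lift]

lemma sixthRoot_pow_six : sixthRoot ^ 6 = 1 := by decide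

lemma norm_eisensteinToComplex_sixthRoot_pow (k : ℕ) :
    ‖eisensteinToComplex (sixthRoot ^ k)‖ = 1 := by
  rw [map_pow, norm_pow]
  refine (congrArg (· ^ k) ?_).trans (one_pow k)
  refine (pow_eq_one_iff_of_nonneg (norm_nonneg _) (by norm_num : 6 ≠ 0)).1 ?_
  rw [← norm_pow, ← map_pow, sixthRoot_pow_six, map_one, norm_one]

lemma norm_eisensteinToComplex_le (c : EisensteinInt) :
    ‖eisensteinToComplex c‖ ≤ |(c.re : ℝ)| + |(c.im : ℝ)| := by
  have hroot : ‖(⟨1 / 2, √3 / 2⟩ : ℂ)‖ = 1 := by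
    simpa [eisensteinToComplex_apply, sixthRoot] using norm_eisensteinToComplex_sixthRoot_pow 1
  rw [eisensteinToComplex_apply]
  refine (norm_add_le _ _).trans_eq ?_
  rw [norm_mul, hroot, mul_one, Complex.norm_intCast, Complex.norm_intCast]

lemma abs_im_sixthRoot_pow_le (k : ℕ) : |(sixthRoot ^ k).im| ≤ 1 := by
  have hcases : ∀ r : Fin 6, |(sixthRoot ^ (r : ℕ)).im| ≤ 1 := by decide
  rw [pow_eq_pow_mod k sixthRoot_pow_six]
  exact hcases ⟨k % 6, Nat.mod_lt k (by norm_num)⟩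

/-- An approximation to `10 ^ 15` times an Eisenstein integer. -/
def eisensteinApprox (c : EisensteinInt) : GaussianInt :=
  ⟨c.re * 10 ^ 15 + c.im * (5 * 10 ^ 14), c.im * 866025403784439⟩

lemma norm_sub_eisensteinApprox_le (c : EisensteinInt) :
    ‖10 ^ 15 * eisensteinToComplex c - eisensteinApprox c‖ ≤ |(c.im : ℝ)| := by
  have hroot : |10 ^ 15 * (√3 / 2) - 866025403784439| ≤ 1 := by
    have hlower : 1732050807568877 / 10 ^ 15 ≤ √3 := Real.le_sqrt_of_sq_le (by norm_num)
    have hupper : √3 ≤ 1732050807568879 / 10 ^ 15 := Real.sqrt_le_iff.2 (by norm_num)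
    rw [abs_le]
    constructor <;> linarith
  have hsplit : 10 ^ 15 * eisensteinToComplex c - eisensteinApprox c =
      c.im * ((10 ^ 15 * (√3 / 2) - 866025403784439 : ℝ) * Complex.I) := by
    rw [eisensteinToComplex_apply, eisensteinApprox, Complex.mk_eq_add_mul_I]
    simp only [GaussianInt.toComplex_def]
    push_cast
    ring
  rw [hsplit, norm_mul, norm_mul, Complex.norm_I, mul_one, Complex.norm_real, Complex.norm_intCast]
  exact mul_le_of_le_one_right (abs_nonneg _) hroot

/-- The value of a formal combination of directions at the directions `u`. -/
def evaluate {κ : Type*} [Fintype κ] (u : κ → ℂ) : (κ → EisensteinInt) →+ ℂ where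
  toFun c := ∑ j, eisensteinToComplex (c j) * u j
  map_zero' := by simp only [Pi.zero_apply, map_zero, zero_mul, Finset.sum_const_zero]
  map_add' c d := by simp only [Pi.add_apply, map_add, add_mul, Finset.sum_add_distrib]

lemma evaluate_apply {κ : Type*} [Fintype κ] (u : κ → ℂ) (c : κ → EisensteinInt) :
    evaluate u c = ∑ j, eisensteinToComplex (c j) * u j := rfl

lemma evaluate_single {κ : Type*} [Fintype κ] [DecidableEq κ] (u : κ → ℂ) (j : κ)
    (c : EisensteinInt) : evaluate u (Pi.single j c) = eisensteinToComplex c * u j := by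
  rw [evaluate_apply, Finset.sum_eq_single j (fun i _ hi ↦ by
    rw [Pi.single_eq_of_ne hi, map_zero, zero_mul]) (by simp), Pi.single_eq_same]

end Eisenstein

namespace RingSegment

open ComplexConjugate

section Data

/-- The triangles of the ring segment. An entry `(a, b, c, j, k)` stands for the triangle whose
vertices have the labels `a`, `b`, `c`, where `b - a = ω ^ k * u j` and `c - a = ω ^ (k + 1) * u j`
for the `j`-th direction `u j`. -/
def triangleTable : Fin 80 → Fin 126 × Fin 126 × Fin 126 × Fin 22 × ℕ :=
  ![
    (0, 1, 2, 0, 5), (1, 3, 4, 1, 4), (2, 6, 5, 1, 5), (3, 7, 8, 2, 5), (4, 9, 6, 0, 0),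
    (5, 11, 10, 3, 2), (7, 12, 13, 4, 4), (8, 14, 15, 4, 5), (9, 16, 17, 5, 0), (10, 19, 18, 6, 2),
    (11, 20, 21, 6, 1), (13, 22, 14, 2, 0), (15, 23, 16, 2, 5), (17, 25, 24, 7, 1),
    (19, 21, 26, 3, 1), (20, 28, 27, 8, 5), (22, 29, 23, 4, 0), (24, 30, 28, 9, 0),
    (25, 31, 32, 10, 5), (27, 34, 33, 9, 5), (29, 35, 36, 11, 3), (30, 37, 34, 8, 0),
    (31, 38, 39, 12, 4), (32, 41, 40, 12, 5), (33, 42, 43, 8, 5), (35, 45, 44, 13, 3),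
    (36, 47, 46, 13, 4), (37, 40, 42, 9, 0), (38, 49, 48, 14, 5), (39, 50, 41, 10, 0),
    (43, 52, 51, 15, 5), (44, 53, 47, 11, 4), (45, 54, 55, 11, 3), (46, 57, 56, 16, 0),
    (48, 58, 59, 17, 5), (49, 61, 60, 17, 4), (50, 62, 63, 18, 0), (51, 64, 65, 19, 5),
    (52, 67, 66, 19, 4), (53, 55, 68, 13, 2), (56, 69, 61, 20, 1), (57, 71, 70, 20, 0),
    (58, 60, 72, 14, 4), (59, 73, 74, 14, 5), (62, 75, 76, 21, 0), (63, 77, 67, 21, 1),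
    (64, 66, 78, 15, 4), (65, 79, 80, 15, 5), (69, 70, 81, 16, 5), (71, 82, 83, 16, 0),
    (72, 84, 73, 17, 0), (74, 85, 86, 17, 5), (75, 88, 87, 18, 0), (76, 89, 77, 18, 1),
    (78, 90, 79, 19, 0), (80, 92, 91, 19, 5), (81, 83, 93, 20, 5), (82, 94, 95, 20, 0),
    (84, 96, 85, 14, 0), (86, 98, 97, 14, 5), (87, 99, 89, 21, 1), (88, 101, 100, 21, 0),
    (90, 102, 92, 15, 0), (91, 104, 103, 15, 5), (93, 95, 105, 16, 5), (94, 106, 107, 16, 0),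
    (96, 108, 98, 17, 0), (97, 110, 109, 17, 5), (99, 100, 111, 18, 5), (101, 113, 112, 18, 0),
    (102, 114, 104, 19, 0), (105, 107, 115, 20, 5), (106, 116, 117, 20, 0), (108, 118, 110, 14, 0),
    (109, 119, 113, 14, 5), (111, 112, 120, 21, 5), (115, 117, 121, 16, 5), (116, 122, 123, 16, 0),
    (118, 124, 119, 17, 0), (121, 123, 125, 20, 5)]

/-- The label of a corner of a triangle. -/
def label (t : Fin 80) : Fin 3 → Fin 126 :=
  ![(triangleTable t).1, (triangleTable t).2.1, (triangleTable t).2.2.1]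

/-- A spanning tree of the ring segment with root `0` and depth `16`. The entry `(i', j, k)` at `i`
stands for the edge `ω ^ k * u j` from `i'` to `i`. -/
def treeTable : Fin 126 → Fin 126 × Fin 22 × ℕ :=
  ![
    (0, 0, 0), (0, 0, 5), (0, 0, 0), (1, 1, 4), (1, 1, 5), (2, 1, 0), (2, 1, 5), (3, 2, 5),
    (3, 2, 0), (4, 0, 0), (5, 3, 3), (5, 3, 2), (7, 4, 4), (7, 4, 5), (8, 4, 5), (8, 4, 0),
    (9, 5, 0), (9, 5, 1), (10, 6, 3), (10, 6, 2), (11, 6, 1), (11, 6, 2), (13, 2, 0), (15, 2, 5),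
    (17, 7, 2), (17, 7, 1), (19, 3, 2), (20, 8, 0), (20, 8, 5), (22, 4, 0), (24, 9, 0),
    (25, 10, 5), (25, 10, 0), (27, 9, 0), (27, 9, 5), (29, 11, 3), (29, 11, 4), (30, 8, 0),
    (31, 12, 4), (31, 12, 5), (32, 12, 0), (32, 12, 5), (33, 8, 5), (33, 8, 0), (35, 13, 4),
    (35, 13, 3), (36, 13, 5), (36, 13, 4), (38, 14, 0), (38, 14, 5), (39, 10, 0), (43, 15, 0),
    (43, 15, 5), (44, 11, 4), (45, 11, 3), (45, 11, 4), (46, 16, 1), (46, 16, 0), (48, 17, 5),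
    (48, 17, 0), (49, 17, 5), (49, 17, 4), (50, 18, 0), (50, 18, 1), (51, 19, 5), (51, 19, 0),
    (52, 19, 5), (52, 19, 4), (53, 13, 3), (56, 20, 1), (57, 20, 1), (57, 20, 0), (58, 14, 5),
    (59, 14, 5), (59, 14, 0), (62, 21, 0), (62, 21, 1), (63, 21, 1), (64, 15, 5), (65, 15, 5),
    (65, 15, 0), (69, 16, 0), (71, 16, 0), (71, 16, 1), (72, 17, 0), (74, 17, 5), (74, 17, 0),
    (75, 18, 1), (75, 18, 0), (76, 18, 1), (78, 19, 0), (80, 19, 0), (80, 19, 5), (81, 20, 0),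
    (82, 20, 0), (82, 20, 1), (84, 14, 0), (86, 14, 0), (86, 14, 5), (87, 21, 1), (88, 21, 1),
    (88, 21, 0), (90, 15, 0), (91, 15, 0), (91, 15, 5), (93, 16, 0), (94, 16, 0), (94, 16, 1),
    (96, 17, 0), (97, 17, 0), (97, 17, 5), (99, 18, 0), (101, 18, 1), (101, 18, 0), (102, 19, 0),
    (105, 20, 0), (106, 20, 0), (106, 20, 1), (108, 14, 0), (109, 14, 5), (111, 21, 0),
    (115, 16, 0), (116, 16, 0), (116, 16, 1), (118, 17, 0), (121, 20, 0)]

/-- The labels of the vertices on the two mirrors. -/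
def mirrorLabel : Fin 2 → Fin 6 → Fin 126 :=
  ![![0, 12, 18, 26, 54, 68], ![103, 114, 120, 122, 124, 125]]

/-- Approximations to `10 ^ 15` times the directions of the ring segment. -/
def phaseTable : Fin 22 → GaussianInt :=
  ![
    ⟨-131268618851307, 991346836230827⟩, ⟨128586579278212, 991698286592010⟩,
    ⟨133667423824878, 991026245771534⟩, ⟨129934638230688, 991522561411418⟩,
    ⟨-131365943939194, 991333944124262⟩, ⟨138650943283657, 990341312844492⟩,
    ⟨-129934638230688, 991522561411418⟩, ⟨-143413227215005, 989662895262714⟩,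
    ⟨148957433913323, 988843608909901⟩, ⟨-147216472474307, 989104296943564⟩,
    ⟨148908158825069, 988851030355598⟩, ⟨-132137637541191, 991231378006686⟩,
    ⟨-150970442645355, 988538277178717⟩, ⟨132137637541191, 991231378006686⟩,
    ⟨-146922382102444, 989148024128514⟩, ⟨-145598771506747, 989343720723857⟩,
    ⟨-146887335066675, 989153229179893⟩, ⟨146495442529169, 989211345122054⟩,
    ⟨-145555108292180, 989350145524855⟩, ⟨145233100986314, 989397466328825⟩,
    ⟨146521734863739, 989207451049839⟩, ⟨145262203937279, 989393193885669⟩]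

/-- An approximation to `100` times the inverse of the Jacobian, at the tabulated directions, of the
system of equations given by `constraint`. -/
def inverseJacobian : Matrix (Fin 22) (Fin 22) ℤ :=
  !![
    2242, -107, -10397, -663, 4766, -3129, 3216, 218, 2737, -3130, 2210, 43, 7091, 8046, -886,
    -8362, 2343, -4316, 5313, -1664, 701, -576;
    -2210, 100, 10519, 508, -5106, 3436, -3350, -264, -2792, 3233, -2276, -57, -7437, -8613, 1120,
    8844, -2626, 4611, -5669, 1929, -532, 386;
    -2649, 114, 10247, 805, -4433, 2832, -3133, -173, -2675, 3022, -2140, -31, -6631, -7489, 664,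
    7883, -2070, 4025, -4962, 1411, -856, 752;
    -2226, 104, 10457, 586, -4934, 3281, -3282, -241, -2764, 3181, -2242, -50, -7261, -8657, 947,
    8600, -2483, 4461, -5489, 1795, -617, 482;
    2627, -108, -10380, -674, 4738, -3104, 3257, 214, 2730, -3120, 2203, 42, 7055, 7998, -868,
    -8320, 2320, -4290, 5282, -1643, 713, -590;
    -2703, 128, 9992, 1091, -3789, 2253, -2976, -86, -2564, 2821, -2011, -6, -5860, -6412, 226,
    6963, -1536, 3465, -4286, 914, -1168, 1105;
    2226, -104, -10457, -586, 4934, -3281, 3282, 241, 2764, -3181, 2242, 50, 7261, 8766, -1055,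
    -8600, 2483, -4461, 5489, -1795, 617, -482;
    2977, -75, -10052, -1427, 3311, -1781, 2871, 69, 2493, -2724, 1952, -12, 5338, 5863, 97, -6285,
    1046, -3053, 3777, -438, 1506, -1512;
    -3517, 136, 10527, 1838, -2886, 1309, -2918, -131, -2553, 2716, -1961, 37, -4891, -5574, -599,
    5785, -560, 2696, -3350, -55, -1944, 1999;
    3321, -80, -10394, -1689, 3006, -1448, 2898, 105, 2570, -2716, 1959, -34, 5045, 5671, 420,
    -5957, 733, -2797, 3482, -121, 1807, -1823;
    -3510, 136, 10855, 1832, -2894, 1318, -2919, -130, -2603, 2717, -1962, 37, -4900, -5580, -591,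
    5795, -568, 2703, -3358, -47, -1937, 1992;
    2635, -110, -10335, -718, 4635, -3012, 3215, 200, 2712, -3087, 2182, 38, 6660, 7826, -799,
    -7962, 2278, -4201, 5174, -1565, 761, -645;
    3657, -85, -11064, -1946, 2709, -1124, 2926, 141, 2596, -2709, 1967, -56, 4761, 5485, 734,
    -5639, 428, -2548, 3196, 188, 2102, -2128;
    -2635, 110, 10335, 718, -4635, 3012, -3215, -200, -2712, 3087, -2182, -38, -6660, -7826, 799,
    7836, -2151, 4201, -5174, 1565, -761, 645;
    3361, -107, -10280, -1705, 2859, -1383, 2950, 249, 2437, -2767, 1851, -27, 5157, 5788, 408,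
    -6087, 766, -2659, 3297, -143, 1844, -1838;
    3267, -109, -10005, -1627, 3031, -1630, 2962, 293, 2375, -2789, 1806, -24, 5293, 5893, 300,
    -6242, 878, -2755, 3495, -252, 1724, -1744;
    3356, -112, -10286, -1799, 2874, -1409, 2949, 244, 2444, -2766, 1854, -35, 5157, 5787, 404,
    -6088, 768, -2672, 3338, -73, 1906, -2004;
    -3353, 115, 10291, 1699, -2884, 1428, -2948, -240, -2449, 2765, -1857, 41, -5157, -5786, -402,
    6088, -770, 2681, -3368, 148, -1782, 1831;
    3261, -114, -10012, -1623, 2911, -1586, 2959, 287, 2383, -2787, 1811, -34, 5293, 5892, 296,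
    -6242, 881, -2697, 3331, -256, 1756, -1739;
    -3267, 109, 10005, 1627, -3031, 1630, -2962, -293, -2375, 2789, -1806, 24, -5293, -5893, -300,
    6242, -878, 2862, -3495, 252, -1724, 1744;
    -3356, 112, 10286, 1799, -2874, 1409, -2949, -244, -2444, 2766, -1854, 35, -5157, -5787, -404,
    6088, -768, 2672, -3338, 201, -1906, 1877;
    -3271, 105, 10000, 1630, -2881, 1659, -2963, -297, -2370, 2790, -1803, 17, -5292, -5894, -303,
    6242, -876, 2671, -3375, 250, -1702, 1747]

end Data

section PathSum

variable {M N : Type*}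

/-- The sum of the steps along the last `n` edges of the tree path from the root to a label; in a
tree of depth `16`, all edges are reached for `n = 16`. -/
def pathSum [AddMonoid M] (step : Fin 22 → ℕ → M) : ℕ → Fin 126 → M
  | 0, _ => 0
  | n + 1, i => if i = 0 then 0 else
      pathSum step n (treeTable i).1 + step (treeTable i).2.1 (treeTable i).2.2

lemma map_pathSum [AddMonoid M] [AddMonoid N] (f : M →+ N) (step : Fin 22 → ℕ → M) (n : ℕ)
    (i : Fin 126) : f (pathSum step n i) = pathSum (fun j k ↦ f (step j k)) n i := by
  induction n generalizing i with
  | zero => exact map_zero f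
  | succ n ih => simp only [pathSum, apply_ite f, map_zero, map_add, ih]

lemma pathSum_sub [AddCommGroup M] (step step' : Fin 22 → ℕ → M) (n : ℕ) (i : Fin 126) :
    pathSum (fun j k ↦ step j k - step' j k) n i = pathSum step n i - pathSum step' n i := by
  induction n generalizing i with
  | zero => exact (sub_zero 0).symm
  | succ n ih =>
    simp only [pathSum, ih]
    split_ifs
    · rw [sub_zero]
    · abel

lemma norm_pathSum_le [SeminormedAddCommGroup M] {step : Fin 22 → ℕ → M} {e : ℝ}
    (hstep : ∀ j k, ‖step j k‖ ≤ e) (n : ℕ) (i : Fin 126) : ‖pathSum step n i‖ ≤ n * e := by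
  induction n generalizing i with
  | zero => simp only [pathSum, norm_zero, Nat.cast_zero, zero_mul, le_refl]
  | succ n ih =>
    rw [pathSum]
    split_ifs
    · have he : 0 ≤ e := (norm_nonneg _).trans (hstep 0 0)
      rw [norm_zero]
      positivity
    · rw [Nat.cast_succ, add_one_mul]
      exact (norm_add_le _ _).trans (add_le_add (ih _) (hstep _ _))

end PathSum

section Constraints

/-- The edge `ω ^ k * u j` as a formal combination of directions. -/
def formalStep (j : Fin 22) (k : ℕ) : Fin 22 → EisensteinInt := Pi.single j (sixthRoot ^ k)

/-- The position of a vertex relative to the root as a formal combination of directions. -/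
def coeff (i : Fin 126) : Fin 22 → EisensteinInt := pathSum formalStep 16 i

/-- The formal combination of directions that vanishes when the sides of the triangle `t` at its
first corner fit the positions of the corners. -/
def sideDefect (t : Fin 80) (s : Fin 2) : Fin 22 → EisensteinInt :=
  coeff (label t s.succ) - coeff (label t 0) -
    formalStep (triangleTable t).2.2.2.1 ((triangleTable t).2.2.2.2 + s)

/-- The six side defects to which all others reduce. -/
def loop (l : Fin 6) : Fin 22 → EisensteinInt :=
  sideDefect (![12, 17, 27, 40, 45, 74] l) (![1, 1, 0, 1, 1, 1] l)

lemma sideDefect_eq_zero_or_loop :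
    ∀ t s, sideDefect t s = 0 ∨ ∃ l, sideDefect t s = loop l := by
  decide +kernel

/-- The equations for the directions: the formal combination multiplied by the axis of the given
index must have a real value. Two equations make a loop close up, and the vertices of each mirror
must be aligned with the first of them. -/
def constraint : Fin 22 → Fin 3 × (Fin 22 → EisensteinInt) :=
  Fin.append (n := 16) (fun l : Fin 6 ↦ (0, loop l)) <|
  Fin.append (n := 10) (fun l : Fin 6 ↦ (2, loop l)) <|
  Fin.append (n := 5) (alignment 0) (alignment 1)
where
  alignment (m : Fin 2) (l : Fin 5) : Fin 3 × (Fin 22 → EisensteinInt) :=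
    (m.castSucc, coeff (mirrorLabel m l.succ) - coeff (mirrorLabel m 0))

lemma forall_loop_and_alignment {p : Fin 3 → (Fin 22 → EisensteinInt) → Prop}
    (hp : ∀ l, p (constraint l).1 (constraint l).2) :
    (∀ l, p 0 (loop l) ∧ p 2 (loop l)) ∧ ∀ m (l : Fin 5),
      p m.castSucc (coeff (mirrorLabel m l.succ) - coeff (mirrorLabel m 0)) := by
  refine ⟨fun l ↦ ⟨?_, ?_⟩, Fin.forall_fin_two.2 ⟨fun l ↦ ?_, fun l ↦ ?_⟩⟩
  · simpa only [constraint, Fin.append_left] using hp (Fin.castAdd 16 l)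
  · simpa only [constraint, Fin.append_left, Fin.append_right] using
      hp (Fin.natAdd 6 (Fin.castAdd 10 l))
  · simpa only [constraint, constraint.alignment, Fin.append_left, Fin.append_right] using
      hp (Fin.natAdd 6 (Fin.natAdd 6 (Fin.castAdd 5 l)))
  · simpa only [constraint, constraint.alignment, Fin.append_right] using
      hp (Fin.natAdd 6 (Fin.natAdd 6 (Fin.natAdd 5 l)))

/-- The rotations that take the two mirrors to the real axis, and the quarter turn. -/
def rotation : Fin 3 → ℂ := ![conj (mirrorDir 17000 0), conj (mirrorDir 17000 1), Complex.I]

/-- Approximations to `10 ^ 15` times the rotations. -/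
def rotationApprox : Fin 3 → GaussianInt :=
  ![⟨10 ^ 15, 0⟩, ⟨999999982924560, -184799566806⟩, ⟨0, 10 ^ 15⟩]

lemma rotation_castSucc (m : Fin 2) : rotation m.castSucc = conj (mirrorDir 17000 m) := by
  fin_cases m <;> rfl

lemma norm_rotation (m : Fin 3) : ‖rotation m‖ = 1 := by
  refine Fin.lastCases Complex.norm_I (fun m ↦ ?_) m
  rw [rotation_castSucc, Complex.norm_conj, mirrorDir, Complex.norm_exp_ofReal_mul_I]

lemma norm_sub_rotationApprox_one_le :
    ‖10 ^ 15 * conj (mirrorDir 17000 1) - (⟨999999982924560, -184799566806⟩ : GaussianInt)‖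
      ≤ 2 := by
  obtain ⟨hlower, hupper⟩ : 0.00018479956785822313 < Real.pi / 17000 ∧
      Real.pi / 17000 < 0.00018479956785822314 := by
    constructor <;> linarith [Real.pi_gt_d20, Real.pi_lt_d20]
  rw [mirrorDir_one, Nat.cast_ofNat]
  set β := Real.pi / 17000
  have hβ : |β| = β := abs_of_pos (hlower.trans' (by norm_num))
  have hpow (n : ℕ) : 0.00018479956785822313 ^ n ≤ β ^ n ∧ β ^ n ≤ 0.00018479956785822314 ^ n :=
    ⟨by gcongr, pow_le_pow_left₀ (hβ ▸ abs_nonneg β) hupper.le n⟩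
  have hre : |10 ^ 15 * Real.cos β - 999999982924560| ≤ 1 := by
    have hcos := abs_le.1 (Real.cos_bound (x := β) (by linarith))
    rw [hβ] at hcos
    have h2 := hpow 2
    have h4 := hpow 4
    norm_num at h2 h4
    rw [abs_le]
    constructor <;> linarith
  have him : |184799566806 - 10 ^ 15 * Real.sin β| ≤ 1 := by
    have hsin := abs_le.1 (Real.sin_bound (x := β) (by linarith))
    rw [hβ] at hsin
    have h3 := hpow 3
    have h5 := hpow 5
    norm_num at h3 h5
    rw [abs_le]
    constructor <;> linarith
  refine (Complex.norm_le_abs_re_add_abs_im _).trans ?_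
  have hexp : 10 ^ 15 * conj (Complex.exp (β * Complex.I)) -
      (⟨999999982924560, -184799566806⟩ : GaussianInt) =
      ⟨10 ^ 15 * Real.cos β - 999999982924560, 184799566806 - 10 ^ 15 * Real.sin β⟩ := by
    rw [Complex.exp_mul_I, ← Complex.ofReal_cos, ← Complex.ofReal_sin, Complex.mk_eq_add_mul_I]
    simp only [GaussianInt.toComplex_def, map_add, map_mul, Complex.conj_ofReal, Complex.conj_I]
    push_cast
    ring
  rw [hexp]
  linarith

lemma norm_sub_rotationApprox_le (m : Fin 3) :
    ‖10 ^ 15 * rotation m - rotationApprox m‖ ≤ 2 := by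
  fin_cases m
  · norm_num [rotation, rotationApprox, mirrorDir_zero, GaussianInt.toComplex_def]
  · exact norm_sub_rotationApprox_one_le
  · norm_num [rotation, rotationApprox, GaussianInt.toComplex_def]

end Constraints

section Realization

lemma norm_mul_sub_mul_le {a a' b b' : ℂ} {d e : ℝ} (ha : ‖a - a'‖ ≤ d) (hb : ‖b - b'‖ ≤ e) :
    ‖a * b - a' * b'‖ ≤ d * ‖b‖ + (‖a‖ + d) * e := by
  have ha' : ‖a'‖ ≤ ‖a‖ + d := (norm_le_insert a a').trans (add_le_add_right ha _)
  calc ‖a * b - a' * b'‖ = ‖(a - a') * b + a' * (b - b')‖ := by congr 1; ring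
    _ ≤ ‖a - a'‖ * ‖b‖ + ‖a'‖ * ‖b - b'‖ := by
      simpa only [norm_mul] using norm_add_le ((a - a') * b) (a' * (b - b'))
    _ ≤ d * ‖b‖ + (‖a‖ + d) * e := by
      gcongr
      exact (norm_nonneg _).trans ha'

/-- The tabulated directions, normalized to length one. -/
def unitPhase (j : Fin 22) : ℂ := phaseTable j / ‖(phaseTable j : ℂ)‖

lemma abs_norm_phaseTable_sub_le (j : Fin 22) : |‖(phaseTable j : ℂ)‖ - 10 ^ 15| ≤ 1 := by
  have hnorm : ∀ j, (10 ^ 15 - 1) ^ 2 ≤ (phaseTable j).norm ∧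
      (phaseTable j).norm ≤ (10 ^ 15 + 1) ^ 2 := by decide +kernel
  have hsq : ((phaseTable j).norm : ℝ) = ‖(phaseTable j : ℂ)‖ ^ 2 := by
    rw [GaussianInt.intCast_real_norm, Complex.normSq_eq_norm_sq]
  have hlower : ((10 : ℝ) ^ 15 - 1) ^ 2 ≤ ‖(phaseTable j : ℂ)‖ ^ 2 := by
    rw [← hsq]
    exact_mod_cast (hnorm j).1
  have hupper : ‖(phaseTable j : ℂ)‖ ^ 2 ≤ ((10 : ℝ) ^ 15 + 1) ^ 2 := by
    rw [← hsq]
    exact_mod_cast (hnorm j).2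
  rw [abs_le]
  constructor
  · linarith [le_of_sq_le_sq hlower (norm_nonneg _)]
  · linarith [le_of_sq_le_sq hupper (by norm_num)]

lemma norm_unitPhase (j : Fin 22) : ‖unitPhase j‖ = 1 := by
  have hpos : 0 < ‖(phaseTable j : ℂ)‖ := by
    linarith [(abs_le.1 (abs_norm_phaseTable_sub_le j)).1]
  rw [unitPhase, norm_div, Complex.norm_real, norm_norm, div_self hpos.ne']

lemma norm_sub_phaseTable_le (j : Fin 22) : ‖10 ^ 15 * unitPhase j - phaseTable j‖ ≤ 1 := by
  have hsplit : 10 ^ 15 * unitPhase j - phaseTable j =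
      ((10 ^ 15 - ‖(phaseTable j : ℂ)‖ : ℝ) : ℂ) * unitPhase j := by
    have hpos : ‖(phaseTable j : ℂ)‖ ≠ 0 := by
      linarith [(abs_le.1 (abs_norm_phaseTable_sub_le j)).1]
    have hmul : (‖(phaseTable j : ℂ)‖ : ℂ) * unitPhase j = phaseTable j :=
      mul_div_cancel₀ _ (Complex.ofReal_ne_zero.2 hpos)
    push_cast
    rw [sub_mul, hmul]
  rw [hsplit, norm_mul, norm_unitPhase, mul_one, Complex.norm_real, Real.norm_eq_abs, abs_sub_comm]
  exact abs_norm_phaseTable_sub_le j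

/-- The coefficients of the equations after the substitution `u j = unitPhase j * exp (x j * I)`. -/
def weight : Matrix (Fin 22) (Fin 22) ℂ :=
  .of fun l j ↦ rotation (constraint l).1 * (eisensteinToComplex ((constraint l).2 j) * unitPhase j)

/-- Approximations to `10 ^ 45` times the weights. -/
def weightApprox : Matrix (Fin 22) (Fin 22) GaussianInt :=
  .of fun l j ↦ rotationApprox (constraint l).1 *
    (eisensteinApprox ((constraint l).2 j) * phaseTable j)

lemma norm_sub_weightApprox_le (l j : Fin 22) :
    ‖10 ^ 45 * weight l j - weightApprox l j‖ ≤ 10 ^ 32 := by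
  have hsmall : ∀ l j, |((constraint l).2 j).re| ≤ 5 ∧ |((constraint l).2 j).im| ≤ 5 := by
    decide +kernel
  obtain ⟨hre, him⟩ := hsmall l j
  set c := (constraint l).2 j
  have hre' : |(c.re : ℝ)| ≤ 5 := by exact_mod_cast hre
  have him' : |(c.im : ℝ)| ≤ 5 := by exact_mod_cast him
  have hnorm : ‖10 ^ 15 * eisensteinToComplex c‖ ≤ 10 ^ 16 := by
    have hc := norm_eisensteinToComplex_le c
    rw [norm_mul, norm_pow, Complex.norm_ofNat]
    linarith
  have hcoeff := norm_mul_sub_mul_le ((norm_sub_eisensteinApprox_le c).trans him')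
    (norm_sub_phaseTable_le j)
  have hweight := norm_mul_sub_mul_le (norm_sub_rotationApprox_le (constraint l).1) hcoeff
  simp only [norm_mul, norm_pow, Complex.norm_ofNat, norm_rotation, norm_unitPhase]
    at hnorm hcoeff hweight
  have hexpand : 10 ^ 45 * weight l j - weightApprox l j = 10 ^ 15 * rotation (constraint l).1 *
      (10 ^ 15 * eisensteinToComplex c * (10 ^ 15 * unitPhase j)) -
      rotationApprox (constraint l).1 * (eisensteinApprox c * phaseTable j) := by
    simp only [weight, weightApprox, Matrix.of_apply, map_mul, c]
    ring
  rw [hexpand]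
  linarith

/-- A choice of unit vectors near the tabulated directions that satisfies the equations. -/
structure IsRealization (u : Fin 22 → ℂ) : Prop where
  norm_eq_one : ∀ j, ‖u j‖ = 1
  norm_sub_phaseTable_le : ∀ j, ‖10 ^ 15 * u j - phaseTable j‖ ≤ 11 * 10 ^ 6
  im_evaluate_constraint : ∀ l, (rotation (constraint l).1 * evaluate u (constraint l).2).im = 0

lemma norm_sub_inverseJacobian_mul_weightApprox_le (i j : Fin 22) :
    ‖(((10 ^ 47 : ℕ) : ℝ) : ℂ) * ((inverseJacobian.map fun a ↦ (a / 100 : ℝ)).map Complex.ofReal *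
      weight) i j - (inverseJacobian.map (↑) * weightApprox : Matrix _ _ GaussianInt) i j‖ ≤
      (10 ^ 37 : ℕ) := by
  have hrow : ∀ i, ∑ k, |inverseJacobian i k| ≤ 10 ^ 5 := by decide +kernel
  have hsplit : (((10 ^ 47 : ℕ) : ℝ) : ℂ) *
      ((inverseJacobian.map fun a ↦ (a / 100 : ℝ)).map Complex.ofReal * weight) i j -
      (inverseJacobian.map (↑) * weightApprox : Matrix _ _ GaussianInt) i j =
      ∑ k, (inverseJacobian i k : ℂ) * (10 ^ 45 * weight k j - weightApprox k j) := by
    simp only [Matrix.mul_apply, Matrix.map_apply, map_sum, map_mul, map_intCast, Finset.mul_sum,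
      ← Finset.sum_sub_distrib]
    refine Finset.sum_congr rfl fun k _ ↦ ?_
    push_cast
    ring
  rw [hsplit]
  calc ‖∑ k, (inverseJacobian i k : ℂ) * (10 ^ 45 * weight k j - weightApprox k j)‖
      ≤ ∑ k, |(inverseJacobian i k : ℝ)| * 10 ^ 32 := by
        refine (norm_sum_le _ _).trans (Finset.sum_le_sum fun k _ ↦ ?_)
        rw [norm_mul, Complex.norm_intCast]
        gcongr
        exact norm_sub_weightApprox_le k j
    _ ≤ (10 ^ 37 : ℕ) := by
        rw [← Finset.sum_mul]
        have h : ∑ k, |(inverseJacobian i k : ℝ)| ≤ 10 ^ 5 := by exact_mod_cast hrow i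
        norm_num at h ⊢
        linarith

theorem exists_isRealization : ∃ u, IsRealization u := by
  obtain ⟨x, hx, hzero⟩ := exists_phaseSystem_eq_zero_of_approx (R := 10 ^ 8)
    _ weight _ (by positivity) (by positivity) norm_sub_inverseJacobian_mul_weightApprox_le
    (by decide +kernel) (by decide +kernel)
  refine ⟨fun j ↦ unitPhase j * Complex.exp (x j * Complex.I), fun j ↦ ?_, fun j ↦ ?_, fun l ↦ ?_⟩
  · rw [norm_mul, norm_unitPhase, Complex.norm_exp_ofReal_mul_I, mul_one]
  · have hexp : ‖Complex.exp (x j * Complex.I) - 1‖ ≤ 1 / 10 ^ 8 := by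
      rw [mul_comm]
      exact Real.norm_exp_I_mul_ofReal_sub_one_le.trans ((hx j).trans_eq (by norm_num))
    have hsplit : 10 ^ 15 * (unitPhase j * Complex.exp (x j * Complex.I)) - phaseTable j =
        10 ^ 15 * unitPhase j * (Complex.exp (x j * Complex.I) - 1) +
          (10 ^ 15 * unitPhase j - phaseTable j) := by ring
    have hmove : ‖10 ^ 15 * unitPhase j * (Complex.exp (x j * Complex.I) - 1)‖ ≤ 10 ^ 7 := by
      rw [norm_mul, norm_mul, norm_unitPhase, norm_pow, Complex.norm_ofNat]
      linarith
    rw [hsplit]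
    refine (norm_add_le_of_le hmove (norm_sub_phaseTable_le j)).trans (by norm_num)
  · refine (congrArg Complex.im ?_).trans (congrFun hzero l)
    rw [evaluate_apply, Finset.mul_sum]
    refine Finset.sum_congr rfl fun j _ ↦ ?_
    simp only [weight, Matrix.of_apply]
    ring

end Realization

section Placement

variable {u : Fin 22 → ℂ}

/-- The position of a vertex of the ring segment relative to the root. -/
def place (u : Fin 22 → ℂ) (i : Fin 126) : ℂ := evaluate u (coeff i)

/-- Approximations to `10 ^ 30` times the positions. -/
def placeApprox (i : Fin 126) : GaussianInt :=
  pathSum (fun j k ↦ eisensteinApprox (sixthRoot ^ k) * phaseTable j) 16 i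

lemma place_eq_pathSum (u : Fin 22 → ℂ) (i : Fin 126) :
    place u i = pathSum (fun j k ↦ eisensteinToComplex (sixthRoot ^ k) * u j) 16 i := by
  rw [place, coeff, map_pathSum]
  simp only [formalStep, evaluate_single]

namespace IsRealization

variable (hu : IsRealization u)
include hu

lemma norm_place_le (i : Fin 126) : ‖place u i‖ ≤ 16 := by
  rw [place_eq_pathSum]
  refine (norm_pathSum_le (e := 1) (fun j k ↦ ?_) 16 i).trans (by norm_num)
  rw [norm_mul, norm_eisensteinToComplex_sixthRoot_pow, hu.norm_eq_one, one_mul]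

lemma norm_sub_placeApprox_le (i : Fin 126) :
    ‖10 ^ 30 * place u i - placeApprox i‖ ≤ 2 * 10 ^ 23 := by
  have hstep (j : Fin 22) (k : ℕ) : ‖10 ^ 30 * (eisensteinToComplex (sixthRoot ^ k) * u j) -
      ((eisensteinApprox (sixthRoot ^ k) * phaseTable j : GaussianInt) : ℂ)‖ ≤
      12 * 10 ^ 21 := by
    have him : |((sixthRoot ^ k).im : ℝ)| ≤ 1 := by exact_mod_cast abs_im_sixthRoot_pow_le k
    have h := norm_mul_sub_mul_le ((norm_sub_eisensteinApprox_le (sixthRoot ^ k)).trans him)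
      (hu.norm_sub_phaseTable_le j)
    simp only [norm_mul, norm_pow, Complex.norm_ofNat, norm_eisensteinToComplex_sixthRoot_pow,
      hu.norm_eq_one] at h
    rw [map_mul, show 10 ^ 30 * (eisensteinToComplex (sixthRoot ^ k) * u j) =
      10 ^ 15 * eisensteinToComplex (sixthRoot ^ k) * (10 ^ 15 * u j) by ring]
    linarith
  have hplace : 10 ^ 30 * place u i =
      pathSum (fun j k ↦ 10 ^ 30 * (eisensteinToComplex (sixthRoot ^ k) * u j)) 16 i := by
    rw [place_eq_pathSum]
    exact map_pathSum (AddMonoidHom.mulLeft (10 ^ 30)) _ 16 i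
  have happrox : (placeApprox i : ℂ) = pathSum (fun j k ↦
      ((eisensteinApprox (sixthRoot ^ k) * phaseTable j : GaussianInt) : ℂ)) 16 i :=
    map_pathSum GaussianInt.toComplex.toAddMonoidHom _ 16 i
  rw [hplace, happrox, ← pathSum_sub]
  exact (norm_pathSum_le hstep 16 i).trans (by norm_num)

lemma norm_sub_sub_placeApprox_le (i j : Fin 126) :
    ‖10 ^ 30 * (place u i - place u j) - (placeApprox i - placeApprox j : GaussianInt)‖ ≤
      4 * 10 ^ 23 := by
  have hsplit : 10 ^ 30 * (place u i - place u j) - (placeApprox i - placeApprox j : GaussianInt) =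
      (10 ^ 30 * place u i - placeApprox i) - (10 ^ 30 * place u j - placeApprox j) := by
    rw [map_sub]
    ring
  rw [hsplit]
  exact (norm_sub_le_of_le (hu.norm_sub_placeApprox_le i) (hu.norm_sub_placeApprox_le j)).trans
    (by norm_num)

lemma norm_sub_rotationApprox_mul_le (m : Fin 3) (i j : Fin 126) :
    ‖10 ^ 45 * (rotation m * (place u i - place u j)) -
      (rotationApprox m * (placeApprox i - placeApprox j) : GaussianInt)‖ ≤ 10 ^ 39 := by
  have hnorm : ‖place u i - place u j‖ ≤ 32 :=
    (norm_sub_le_of_le (hu.norm_place_le i) (hu.norm_place_le j)).trans (by norm_num)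
  have h := norm_mul_sub_mul_le (norm_sub_rotationApprox_le m)
    (hu.norm_sub_sub_placeApprox_le i j)
  simp only [norm_mul, norm_pow, Complex.norm_ofNat, norm_rotation] at h
  rw [map_mul, show 10 ^ 45 * (rotation m * (place u i - place u j)) =
    10 ^ 15 * rotation m * (10 ^ 30 * (place u i - place u j)) by ring]
  linarith

lemma evaluate_loop (l : Fin 6) : evaluate u (loop l) = 0 := by
  obtain ⟨hre, him⟩ := (forall_loop_and_alignment
    (p := fun m c ↦ (rotation m * evaluate u c).im = 0) hu.im_evaluate_constraint).1 l
  refine Complex.ext ?_ ?_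
  · simpa [rotation] using him
  · simpa [rotation, mirrorDir_zero] using hre

lemma place_label_succ (t : Fin 80) (s : Fin 2) :
    place u (label t s.succ) = place u (label t 0) +
      eisensteinToComplex (sixthRoot ^ ((triangleTable t).2.2.2.2 + s)) *
        u (triangleTable t).2.2.2.1 := by
  have hside : evaluate u (sideDefect t s) = 0 := by
    obtain h | ⟨l, h⟩ := sideDefect_eq_zero_or_loop t s
    · rw [h, map_zero]
    · rw [h, hu.evaluate_loop]
  rw [sideDefect, map_sub, map_sub, formalStep, evaluate_single, sub_eq_zero] at hside
  exact eq_add_of_sub_eq' hside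

lemma dist_place_label (t : Fin 80) {a b : Fin 3} (hab : a ≠ b) :
    dist (place u (label t a)) (place u (label t b)) = 1 := by
  have hspoke (s : Fin 2) : dist (place u (label t s.succ)) (place u (label t 0)) = 1 := by
    rw [hu.place_label_succ, dist_eq_norm, add_sub_cancel_left, norm_mul,
      norm_eisensteinToComplex_sixthRoot_pow, hu.norm_eq_one, one_mul]
  have hopposite : dist (place u (label t 2)) (place u (label t 1)) = 1 := by
    set j := (triangleTable t).2.2.2.1
    set k := (triangleTable t).2.2.2.2
    have hroot : sixthRoot ^ (k + 1) - sixthRoot ^ k = sixthRoot ^ (k + 2) := by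
      rw [pow_succ, ← mul_sub_one, pow_add]
      congr 1
    have h₁ : place u (label t 1) =
        place u (label t 0) + eisensteinToComplex (sixthRoot ^ k) * u j :=
      hu.place_label_succ t 0
    have h₂ : place u (label t 2) =
        place u (label t 0) + eisensteinToComplex (sixthRoot ^ (k + 1)) * u j :=
      hu.place_label_succ t 1
    rw [dist_eq_norm, h₁, h₂, add_sub_add_left_eq_sub, ← sub_mul, ← map_sub, hroot, norm_mul,
      norm_eisensteinToComplex_sixthRoot_pow, hu.norm_eq_one, one_mul]
  fin_cases a <;> fin_cases b
  exacts [(hab rfl).elim, (dist_comm _ _).trans (hspoke 0), (dist_comm _ _).trans (hspoke 1),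
    hspoke 0, (hab rfl).elim, (dist_comm _ _).trans hopposite, hspoke 1, hopposite,
    (hab rfl).elim]

end IsRealization

end Placement

section Geometry

lemma re_conj_mul_pos {w : ℂ} {g d : GaussianInt} {e : ℤ} (hw : ‖w - g‖ ≤ e)
    (hd : (|d.re| + |d.im|) * e < (star d * g).re) : 0 < (conj (d : ℂ) * w).re := by
  have hd' : (|(d.re : ℝ)| + |(d.im : ℝ)|) * e < ((star d * g).re : ℤ) := by exact_mod_cast hd
  have herror : |(conj (d : ℂ) * (w - g)).re| ≤ (|(d.re : ℝ)| + |(d.im : ℝ)|) * e := by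
    refine (Complex.abs_re_le_norm _).trans ?_
    rw [norm_mul, Complex.norm_conj]
    exact mul_le_mul (norm_toComplex_le d) hw (norm_nonneg _) (by positivity)
  rw [GaussianInt.intCast_re (star d * g), map_mul, GaussianInt.toComplex_star] at hd'
  rw [mul_sub, Complex.sub_re] at herror
  linarith [(abs_le.1 herror).1]

lemma ne_zero_of_norm_sub_le {w : ℂ} {g : GaussianInt} {e : ℤ} (hw : ‖w - g‖ ≤ e)
    (hg : e ^ 2 < g.norm) : w ≠ 0 := by
  rintro rfl
  have hg' : (e : ℝ) ^ 2 < g.norm := by exact_mod_cast hg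
  rw [zero_sub, norm_neg] at hw
  rw [GaussianInt.intCast_real_norm, Complex.normSq_eq_norm_sq] at hg'
  exact hg'.not_ge (pow_le_pow_left₀ (norm_nonneg _) hw 2)

/-- Directions in which two triangles may be separated: from center to center, and perpendicular
to the sides. -/
def candidates (t t' : Fin 80) : List GaussianInt :=
  (∑ a, placeApprox (label t' a) - ∑ a, placeApprox (label t a)) ::
    (List.ofFn (fun a ↦ ⟨0, -1⟩ * side t a) ++ List.ofFn fun a ↦ ⟨0, 1⟩ * side t' a)
where
  side (t : Fin 80) (a : Fin 3) : GaussianInt :=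
    placeApprox (label t (a + 1)) - placeApprox (label t a)

lemma exists_mem_candidates : ∀ t t', t < t' → ∃ d ∈ candidates t t', ∀ a b,
    label t a = label t' b ∨ (|d.re| + |d.im|) * (4 * 10 ^ 23) <
      (star d * (placeApprox (label t' b) - placeApprox (label t a))).re := by
  decide +kernel

lemma approx_bend : ∀ t t', t < t' → ∀ a b, label t a = label t' b → ∀ a' b', a' ≠ a → b' ≠ b →
    (8 * 10 ^ 23) ^ 2 < (placeApprox (label t a') - placeApprox (label t a) +
      (placeApprox (label t' b') - placeApprox (label t' b))).norm := by
  decide +kernel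

lemma approx_bend_mirror : ∀ m t a, (∃ l, mirrorLabel m l = label t a) → ∀ a' b', a' ≠ a → b' ≠ a →
    (2 * 10 ^ 39) ^ 2 < (star (rotationApprox m.castSucc *
        (placeApprox (label t a') - placeApprox (label t a))) +
      rotationApprox m.castSucc * (placeApprox (label t b') - placeApprox (label t a))).norm := by
  decide +kernel

lemma approx_height : ∀ m i, (∃ l, mirrorLabel m l = i) ∨ 10 ^ 39 < (-1) ^ (m : ℕ) *
    (rotationApprox m.castSucc * (placeApprox i - placeApprox (mirrorLabel m 0))).im := by
  decide +kernel

lemma card_filter_label : ∀ i, (Finset.univ.filter fun t ↦ ∃ a, label t a = i).card =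
    if ∃ m l, mirrorLabel m l = i then 1 else 2 := by
  decide +kernel

lemma mirrorLabel_zero_ne_mirrorLabel_one : ∀ l l', mirrorLabel 0 l ≠ mirrorLabel 1 l' := by
  decide +kernel

lemma eq_of_mirrorLabel_eq_label : ∀ m t a b, (∃ l, mirrorLabel m l = label t a) →
    (∃ l, mirrorLabel m l = label t b) → a = b := by
  decide +kernel

namespace IsRealization

variable {u : Fin 22 → ℂ} (hu : IsRealization u)
include hu

lemma exists_separating_form {t t' : Fin 80} (h : t ≠ t') : ∃ f : ℂ →ₗ[ℝ] ℝ, ∀ a b,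
    label t a = label t' b ∨ f (place u (label t a)) < f (place u (label t' b)) := by
  wlog hlt : t < t' generalizing t t'
  · obtain ⟨f, hf⟩ := this h.symm (h.lt_or_gt.resolve_left hlt)
    exact ⟨-f, fun a b ↦ (hf b a).imp Eq.symm neg_lt_neg⟩
  obtain ⟨d, -, hd⟩ := exists_mem_candidates t t' hlt
  refine ⟨Complex.reLm ∘ₗ LinearMap.mulLeft ℝ (conj (d : ℂ)), fun a b ↦ (hd a b).imp_right ?_⟩
  intro hab
  have hpos := re_conj_mul_pos (e := 4 * 10 ^ 23)
    ((hu.norm_sub_sub_placeApprox_le (label t' b) (label t a)).trans_eq (by norm_num)) hab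
  rw [mul_left_comm, show (10 : ℂ) ^ 30 = (10 ^ 30 : ℝ) by norm_num, Complex.re_ofReal_mul,
    mul_sub, Complex.sub_re] at hpos
  exact sub_pos.1 (pos_of_mul_pos_right hpos (by positivity))

lemma place_label_inj {t t' : Fin 80} {a b : Fin 3} :
    place u (label t a) = place u (label t' b) ↔ label t a = label t' b := by
  refine ⟨fun h ↦ ?_, fun h ↦ h ▸ rfl⟩
  obtain rfl | htt := eq_or_ne t t'
  · by_contra hne
    have hdist := hu.dist_place_label t (a := a) (b := b) (by rintro rfl; exact hne rfl)
    rw [h, dist_self] at hdist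
    exact zero_ne_one hdist
  · obtain ⟨f, hf⟩ := hu.exists_separating_form htt
    exact (hf a b).resolve_right (h ▸ lt_irrefl _)

lemma not_straight {t t' : Fin 80} (htt : t ≠ t') {a b a' b' : Fin 3}
    (h : label t a = label t' b) (ha : a' ≠ a) (hb : b' ≠ b) :
    place u (label t a') + place u (label t' b') ≠ 2 * place u (label t a) := by
  wlog hlt : t < t' generalizing t t' a b a' b'
  · rw [add_comm, h]
    exact this htt.symm h.symm hb ha (htt.lt_or_gt.resolve_left hlt)
  have herror := norm_add_le_of_le (hu.norm_sub_sub_placeApprox_le (label t a') (label t a))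
    (hu.norm_sub_sub_placeApprox_le (label t' b') (label t' b))
  rw [← add_sub_add_comm, ← mul_add, ← map_add] at herror
  have hne := ne_zero_of_norm_sub_le (e := 8 * 10 ^ 23)
    (herror.trans_eq (by norm_num)) (approx_bend t t' hlt a b h a' b' ha hb)
  intro hsum
  refine hne ?_
  rw [← h]
  linear_combination 10 ^ 30 * hsum

end IsRealization

namespace IsRealization

variable {u : Fin 22 → ℂ} (hu : IsRealization u)
include hu

lemma im_rotation_mul_sub_mirrorLabel (m : Fin 2) (l : Fin 6) :
    (rotation m.castSucc *
      (place u (mirrorLabel m l) - place u (mirrorLabel m 0))).im = 0 := by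
  refine Fin.cases (by rw [sub_self, mul_zero, Complex.zero_im]) (fun l ↦ ?_) l
  rw [place, place, ← map_sub]
  exact (forall_loop_and_alignment
    (p := fun m c ↦ (rotation m * evaluate u c).im = 0) hu.im_evaluate_constraint).2 m l

lemma height_pos {m : Fin 2} {i : Fin 126} (hi : ¬∃ l, mirrorLabel m l = i) :
    0 < (-1) ^ (m : ℕ) *
      (rotation m.castSucc * (place u i - place u (mirrorLabel m 0))).im := by
  have happrox := (approx_height m i).resolve_left hi
  have herror := (Complex.abs_im_le_norm _).trans
    (hu.norm_sub_rotationApprox_mul_le m.castSucc i (mirrorLabel m 0))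
  rw [Complex.sub_im, show (10 : ℂ) ^ 45 = (10 ^ 45 : ℝ) by norm_num, Complex.im_ofReal_mul,
    ← GaussianInt.intCast_im] at herror
  set y := (rotation m.castSucc * (place u i - place u (mirrorLabel m 0))).im
  set g := (rotationApprox m.castSucc * (placeApprox i - placeApprox (mirrorLabel m 0))).im
  have happrox' : (10 : ℝ) ^ 39 < (-1) ^ (m : ℕ) * g := by exact_mod_cast happrox
  have hle := (neg_le_abs ((-1) ^ (m : ℕ) * (10 ^ 45 * y - g))).trans_eq (abs_mul _ _)
  rw [abs_neg_one_pow, one_mul] at hle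
  linarith

end IsRealization

variable {u : Fin 22 → ℂ}

/-- The distance by which the ring segment is moved along the first mirror to put the vertices of
the second column onto the second mirror. -/
def offset (u : Fin 22 → ℂ) : ℝ :=
  (rotation 1 * place u (mirrorLabel 1 0)).im / Real.sin (Real.pi / 17000)

/-- The vertices of the ring segment in the sector between the two mirrors. -/
def vertex (u : Fin 22 → ℂ) (i : Fin 126) : ℂ := offset u + place u i

lemma place_mirrorLabel_zero_zero (u : Fin 22 → ℂ) : place u (mirrorLabel 0 0) = 0 :=
  place_eq_pathSum u _

lemma mirrorForm_vertex (u : Fin 22 → ℂ) (m : Fin 2) (i : Fin 126) :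
    mirrorForm 17000 m (vertex u i) = (-1) ^ (m : ℕ) *
      (rotation m.castSucc * (place u i - place u (mirrorLabel m 0))).im := by
  have hoffset : (rotation m.castSucc * offset u).im =
      -(rotation m.castSucc * place u (mirrorLabel m 0)).im := by
    refine (Complex.im_mul_ofReal _ _).trans ?_
    fin_cases m
    · simp [rotation, mirrorDir_zero, place_mirrorLabel_zero_zero]
    · have hsin : Real.sin (Real.pi / 17000) ≠ 0 :=
        (Real.sin_pos_of_pos_of_lt_pi (by positivity) (by linarith [Real.pi_pos])).ne'
      have him : (rotation 1).im = -Real.sin (Real.pi / 17000) := by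
        change (conj (mirrorDir 17000 1)).im = _
        rw [mirrorDir_one, Complex.conj_im, Complex.exp_ofReal_mul_I_im, Nat.cast_ofNat]
      change (rotation 1).im * offset u = _
      rw [him, offset, neg_mul, mul_div_cancel₀ _ hsin]
      rfl
  rw [mirrorForm_apply, ← rotation_castSucc, vertex, mul_add, Complex.add_im, hoffset, mul_sub,
    Complex.sub_im, neg_add_eq_sub]

namespace IsRealization

variable (hu : IsRealization u)
include hu

lemma mirrorForm_vertex_eq_zero_iff {m : Fin 2} {i : Fin 126} :
    mirrorForm 17000 m (vertex u i) = 0 ↔ ∃ l, mirrorLabel m l = i := by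
  rw [mirrorForm_vertex]
  refine ⟨fun h ↦ not_not.1 fun hi ↦ (hu.height_pos hi).ne' h, ?_⟩
  rintro ⟨l, rfl⟩
  rw [hu.im_rotation_mul_sub_mirrorLabel, mul_zero]

lemma vertex_mem_sector (i : Fin 126) : vertex u i ∈ sector 17000 := by
  refine mem_sector_of_mirrorForm_nonneg (by norm_num) (fun m ↦ ?_) ?_
  · by_cases hi : ∃ l, mirrorLabel m l = i
    · exact (hu.mirrorForm_vertex_eq_zero_iff.2 hi).ge
    · rw [mirrorForm_vertex]
      exact (hu.height_pos hi).le
  · by_contra! hzero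
    obtain ⟨l, hl⟩ := hu.mirrorForm_vertex_eq_zero_iff.1 (hzero 0)
    obtain ⟨l', hl'⟩ := hu.mirrorForm_vertex_eq_zero_iff.1 (hzero 1)
    exact mirrorLabel_zero_ne_mirrorLabel_one l l' (hl.trans hl'.symm)

lemma not_straight_mirror {m : Fin 2} {t : Fin 80} {a a' b' : Fin 3}
    (h : mirrorForm 17000 m (vertex u (label t a)) = 0) (ha : a' ≠ a) (hb : b' ≠ a) :
    mirrorReflection 17000 m (vertex u (label t a')) + vertex u (label t b') ≠
      2 * vertex u (label t a) := by
  intro hsum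
  have hbend := conj_mul_sub_add_eq_zero_of_reflection h hsum
  rw [← rotation_castSucc, vertex, vertex, vertex, add_sub_add_left_eq_sub,
    add_sub_add_left_eq_sub] at hbend
  have herror' := hu.norm_sub_rotationApprox_mul_le m.castSucc (label t a') (label t a)
  rw [← Complex.norm_conj, map_sub, map_mul, map_pow, Complex.conj_ofNat,
    ← GaussianInt.toComplex_star] at herror'
  have herror := norm_add_le_of_le herror'
    (hu.norm_sub_rotationApprox_mul_le m.castSucc (label t b') (label t a))
  rw [← add_sub_add_comm, ← mul_add, ← map_add, hbend, mul_zero] at herror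
  exact ne_zero_of_norm_sub_le (e := 2 * 10 ^ 39) (herror.trans_eq (by norm_num))
    (approx_bend_mirror m t a (hu.mirrorForm_vertex_eq_zero_iff.1 h) a' b' ha hb) rfl

/-- The triangles of the ring segment. -/
def patch : TrianglePatch (Fin 80) where
  corner t a := vertex u (label t a)
  dist_corner t a b hab := (dist_add_left _ _ _).trans (hu.dist_place_label t hab)
  exists_corner_of_mem_hull t t' htt z hz hz' := by
    obtain ⟨f, hf⟩ := hu.exists_separating_form htt
    obtain ⟨⟨a, ha⟩, b, hb⟩ := mem_inter_of_mem_convexHull_of_map_lt f (by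
      rintro _ ⟨a, rfl⟩ _ ⟨b, rfl⟩
      refine (hf a b).imp (congrArg _) fun h ↦ ?_
      simp only [vertex, map_add]
      exact add_lt_add_right h _) hz hz'
    exact ⟨a, b, ha, hb⟩
  not_straight t t' htt a b a' b' hab ha hb := by
    have hab' := hu.place_label_inj.1 (add_left_cancel hab)
    intro hsum
    refine hu.not_straight htt hab' ha hb ?_
    simp only [vertex] at hsum
    linear_combination hsum

lemma valence_patch (t : Fin 80) (a : Fin 3) : hu.patch.valence (hu.patch.corner t a) =
    if ∃ m l, mirrorLabel m l = label t a then 1 else 2 := by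
  rw [← card_filter_label, ← Set.ncard_coe_finset, TrianglePatch.valence]
  congr 1
  ext t'
  simp only [patch, Set.mem_range, Set.mem_ofPred_eq, vertex, add_right_inj, hu.place_label_inj,
    Finset.coe_filter, Finset.mem_univ, true_and]

/-- The half wedge from which the ring is unfolded. -/
def halfWedge : HalfWedge (Fin 80) 17000 where
  __ := hu.patch
  corner_mem_sector t a := hu.vertex_mem_sector (label t a)
  corner_unique_on_mirror t m a b ha hb := eq_of_mirrorLabel_eq_label m t a b
    (hu.mirrorForm_vertex_eq_zero_iff.1 ha) (hu.mirrorForm_vertex_eq_zero_iff.1 hb)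
  valence_of_mirror t a m ha :=
    (hu.valence_patch t a).trans (if_pos ⟨m, hu.mirrorForm_vertex_eq_zero_iff.1 ha⟩)
  valence_of_not_mirror t a ha := (hu.valence_patch t a).trans
    (if_neg fun ⟨m, hm⟩ ↦ ha m (hu.mirrorForm_vertex_eq_zero_iff.2 hm))
  not_straight_mirror _ _ _ _ _ h ha hb := hu.not_straight_mirror h ha hb

end IsRealization

end Geometry

end RingSegment

/-- There exist infinitely many pairwise non-congruent finite
4-regular straight-line unit-distance graphs built from non-overlapping unit
triangles, in which every edge lies in a unit triangle and there are no
additional triangles; equivalently, for every `N` there is such a graph with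
more than `N` unit triangles. -/
theorem infinitely_many_four_regular_unit_triangle_graphs :
    (∃ f : ℕ → UnitDistGraph,
      (∀ n, (f n).Regular4 ∧ (f n).NonOverlapping ∧ (f n).OnlyUnitTriangles ∧
        (f n).NoAdditionalTriangles) ∧
      ∀ m n, m ≠ n → ¬ UnitDistGraph.Congruent (f m) (f n)) ∧
    (∀ N : ℕ, ∃ G : UnitDistGraph, G.Regular4 ∧ G.NonOverlapping ∧
      G.OnlyUnitTriangles ∧ G.NoAdditionalTriangles ∧ N < G.triangleCount) := by
  obtain ⟨u, hu⟩ := RingSegment.exists_isRealization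
  have hfinite : Finite (rootSymmetries 17000) := finite_rootSymmetries (by norm_num)
  let := Fintype.ofFinite (Fin 80 × rootSymmetries 17000)
  choose f hf hcount using (hu.halfWedge.unfold (by norm_num)).exists_graph_triangleCount_eq
    (hu.halfWedge.valence_unfold (by norm_num))
  have hpos : 0 < Fintype.card (Fin 80 × rootSymmetries 17000) := Fintype.card_pos
  refine ⟨⟨f, hf, fun m n hmn hcongr ↦ hmn ?_⟩, fun N ↦ ⟨f (N + 1), ?_⟩⟩
  · have hcard := hcongr.triangleCount_eq
    rw [hcount, hcount] at hcard
    exact Nat.eq_of_mul_eq_mul_right hpos hcard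
  · obtain ⟨hregular, hoverlap, honly, hadditional⟩ := hf (N + 1)
    refine ⟨hregular, hoverlap, honly, hadditional, ?_⟩
    rw [hcount]
    exact N.lt_succ_self.trans_le (Nat.le_mul_of_pos_right _ hpos)
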